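/- Fix δ > 0 and ε > 0. Then there exist C > 0, η > 0 and n₀ such that for all n ≥ n₀ and all M, k with M/N ∈ [δ, 1−δ] and k/n ∈ [δ, 1−δ], with probability at least 1 − exp(−n^η) over G = G_{n,M} the following holds for each i ∈ {0,1,2}: Var(E[(W' − W)^i · (W̄' − W̄)^{2−i} | 𝐖]) ≤ C·n^{−3+ε}, where the variance and conditional expectation are over the random choice of the uniform k-set S, x uniform on S, and x̄ uniform on S̄, conditioning on the pair 𝐖 = (W, W̄). -/

import Mathlib

/-!
Since `𝐖` is a function of `S`, Jensen's inequality bounds the variance of `E[f | 𝐖]` by the mean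
square deviation of `E[f | S]` from any constant (`Varu_condExpU_le`). It therefore suffices that,
for a typical graph, `E[f | S]` is close to one explicit number (`momCenter`, up to the factor
`n⁻²`) for all but an exponentially small fraction of the `k`-sets `S`.

Put `p = M / N` and `ξ e = 1[e ∈ G] - p`. The increment of `e(S)` or `e(S̄)` under a swap is a
difference of two centred degrees minus one `ξ` (`swapInc`). Averaging a product of two such
increments over `(x, x̄)` leaves sums of centred degrees and sums over vertices of products of two
centred degrees. The diagonal part of the latter gives `momCenter` up to linear sums; the
off-diagonal part is a quadratic form over pairs of distinct edges sharing a vertex (`cherryForm`).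

For a fixed `S` these quantities are controlled in the binomial random graph. Linear sums satisfy
Hoeffding's inequality (`linear_tail`). For the quadratic form, reveal the edges one by one: the
coefficient of an edge is a linear form in earlier edges, which is of order `√n` up to a factor
`L = n ^ o(1)` with high probability; after truncation of these coefficients, Azuma's inequality
bounds the form by `O(n ^ (3/2) L²)` (`quad_tail`). So `S` is `Good` outside an event of probability
`O(n² exp (-L² / 16))` (`bad_prob`), and goodness makes `n² E[f | S]` lie within `O(√n L²)` of
`momCenter` (`good_close`), which contributes `O(L⁴ n⁻³)` to the variance.

Because the mode of a binomial distribution with integer mean is its mean, passing from the binomial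
random graph to `G_{n,M}` multiplies probabilities by at most `N + 1` (`transfer`). Double counting
pairs (bad `k`-set, graph) and Markov's inequality (`few_bad_prob`) then show that with probability
at least `1 - exp (-L)` at most a fraction `exp (-L)` of the `k`-sets is bad; on these
the deviation is bounded trivially (`bad_close`). The choice `L = n ^ (ε / 4)` finishes the proof.
-/

open Finset MeasureTheory ProbabilityTheory

noncomputable section

/-- Uniform probability of an event `P` over a finite sample space `Ω`. -/
def Pru {α : Type*} (Ω : Finset α) (P : α → Prop) : ℝ := by
  classical exact ((Ω.filter P).card : ℝ) / Ω.card

/-- Expectation of `f` under the uniform distribution on `Ω`. -/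
def Exu {α : Type*} (Ω : Finset α) (f : α → ℝ) : ℝ := (∑ a ∈ Ω, f a) / Ω.card

/-- Variance of `f` under the uniform distribution on `Ω`. -/
def Varu {α : Type*} (Ω : Finset α) (f : α → ℝ) : ℝ := Exu Ω (fun a => (f a - Exu Ω f) ^ 2)

/-- Conditional expectation of `f` given the value of `g`, under uniform distribution on `Ω`. -/
def condExpU {α β : Type*} (Ω : Finset α) (f : α → ℝ) (g : α → β) (ω : α) : ℝ := by
  classical exact Exu (Ω.filter (fun ω' => g ω' = g ω)) f

/-- The edge set of the complete graph on `[n]`. -/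
def completeEdges (n : ℕ) : Finset (Sym2 (Fin n)) := by
  classical exact Finset.univ.filter (fun e => ¬ e.IsDiag)

/-- A finset of `Sym2`s is a graph if it has no loops. -/
def IsGraph {n : ℕ} (G : Finset (Sym2 (Fin n))) : Prop := ∀ e ∈ G, ¬ e.IsDiag

/-- The sample space of `G_{n,M}`: all graphs on `[n]` with exactly `M` edges. -/
def graphsM (n M : ℕ) : Finset (Finset (Sym2 (Fin n))) := by
  classical exact (completeEdges n).powerset.filter (fun G => G.card = M)

/-- `e(S)`: number of edges of `G` with both endpoints in `S`. -/
def edgesIn {n : ℕ} (G : Finset (Sym2 (Fin n))) (S : Finset (Fin n)) : ℕ := by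
  classical exact (G.filter (fun e => ∀ v ∈ e, v ∈ S)).card

/-- `d_S(v)`: number of neighbours of `v` (in graph `G`) lying in `S`. -/
def dS {n : ℕ} (G : Finset (Sym2 (Fin n))) (S : Finset (Fin n)) (v : Fin n) : ℕ := by
  classical exact (S.filter (fun w => s(v, w) ∈ G)).card

/-- All `k`-element subsets of `[n]`. -/
def kSets (n k : ℕ) : Finset (Finset (Fin n)) := Finset.univ.powersetCard k

/-- Probability of an event under the uniform random graph `G_{n,M}`. -/
def PrGnM (n M : ℕ) (P : Finset (Sym2 (Fin n)) → Prop) : ℝ := Pru (graphsM n M) P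

/-- Probability of an event under the binomial random graph `G_{n,p}`. -/
def PrGnp (n : ℕ) (p : ℝ) (P : Finset (Sym2 (Fin n)) → Prop) : ℝ := by
  classical exact ∑ G ∈ (completeEdges n).powerset,
    if (P G) then p ^ G.card * (1 - p) ^ ((completeEdges n).card - G.card) else 0

/-- `N = n(n-1)/2` as a real number. -/
def Nr (n : ℕ) : ℝ := (n : ℝ) * ((n : ℝ) - 1) / 2

/-- `K = k(k-1)/2` as a real number. -/
def Kr (k : ℕ) : ℝ := (k : ℝ) * ((k : ℝ) - 1) / 2

/-- `λ = ((n²-k²)k²/(2n⁴))·(M(N-M)/N²)`. -/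
def lamP (n M k : ℕ) : ℝ :=
  (((n:ℝ)^2 - (k:ℝ)^2) * (k:ℝ)^2 / (2 * (n:ℝ)^4)) * ((M:ℝ) * (Nr n - (M:ℝ)) / (Nr n)^2)

/-- The mean `K·M/N`. -/
def muP (n M k : ℕ) : ℝ := Kr k * (M:ℝ) / Nr n

/-- `W = (e(S) - K·M/N)/n`. -/
def Wfun (n M k : ℕ) (G : Finset (Sym2 (Fin n))) (S : Finset (Fin n)) : ℝ :=
  ((edgesIn G S : ℝ) - muP n M k) / n

/-- `V = Σ_v d(v)² - n·d(G)²`, i.e. `n` times the degree variance. -/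
def Vdeg {n : ℕ} (G : Finset (Sym2 (Fin n))) : ℝ :=
  (∑ v : Fin n, (dS G Finset.univ v : ℝ) ^ 2) - (n:ℝ) * (2 * (G.card : ℝ) / n) ^ 2

/-- Gaussian CDF with mean `m` and variance `v`. -/
def gaussCdf (m v z : ℝ) : ℝ := ((gaussianReal m v.toNNReal) (Set.Iic z)).toReal

/-- Gaussian measure of a set, mean `m`, variance `v`. -/
def gaussMeas (m v : ℝ) (A : Set ℝ) : ℝ := ((gaussianReal m v.toNNReal) A).toReal

/-- Gaussian density with mean `m` and variance `v`. -/
def gaussPdf (m v x : ℝ) : ℝ := gaussianPDFReal m v.toNNReal x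

/-- `P(Y ∈ ·)` for `Y ~ Bin(ν, p)`. -/
def binomPr (ν : ℕ) (p : ℝ) (P : ℕ → Prop) : ℝ := by
  classical exact ∑ j ∈ Finset.range (ν + 1),
    if (P j) then (ν.choose j : ℝ) * p ^ j * (1 - p) ^ (ν - j) else 0

/-- Sample space for "uniform `k`-set `S`, then uniform `x ∈ S` and `x̄ ∈ S̄`". -/
def SwapΩ (n k : ℕ) : Finset (Σ _ : Finset (Fin n), Fin n × Fin n) :=
  (kSets n k).sigma (fun S => S ×ˢ Sᶜ)

/-- A triple `(a, r, t)` is valid for `β`. -/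
def ValidTriple (β : ℝ) (n a r t : ℕ) : Prop :=
  a ≤ r ∧
  (∃ c : ℝ, 1/2 ≤ c ∧ c ≤ 1 ∧ (a : ℝ) = c * (t:ℝ) ^ ((3:ℝ)/2) * (n:ℝ) ^ (2*β - 1/2)) ∧
  (r : ℝ) ≤ (n:ℝ) ^ (-β) * Real.sqrt ((n:ℝ) * (t:ℝ))


/-! ### Independent bits on a finite set -/

/-- Expectation of `f` over a random subset of `E` containing each element independently with
probability `p`. -/
def Ep {α : Type*} [DecidableEq α] (p : ℝ) (E : Finset α) (f : Finset α → ℝ) : ℝ :=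
  ∑ G ∈ E.powerset, (∏ e ∈ E, if e ∈ G then p else 1 - p) * f G

open Classical in
/-- Probability of the event `A` for the random subset underlying `Ep`. -/
def Pp {α : Type*} [DecidableEq α] (p : ℝ) (E : Finset α) (A : Finset α → Prop) : ℝ :=
  Ep p E (fun G => if A G then 1 else 0)

/-- The centred indicator `1[e ∈ G] - p`. -/
def xi {α : Type*} [DecidableEq α] (p : ℝ) (e : α) (G : Finset α) : ℝ :=
  (if e ∈ G then 1 else 0) - p

section Bits

variable {α : Type*} [DecidableEq α] {p : ℝ}

lemma Ep_insert {E : Finset α} {e : α} (he : e ∉ E) (f : Finset α → ℝ) :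
    Ep p (insert e E) f = Ep p E (fun G => (1 - p) * f G + p * f (insert e G)) := by
  unfold Ep
  rw [sum_powerset_insert he, ← sum_add_distrib]
  refine sum_congr rfl fun G hG => ?_
  have heG : e ∉ G := fun h => he (mem_powerset.1 hG h)
  have h1 : ∏ x ∈ E, (if x ∈ insert e G then p else 1 - p) =
      ∏ x ∈ E, (if x ∈ G then p else 1 - p) := by
    refine prod_congr rfl fun x hx => ?_
    have : x ≠ e := fun h => he (h ▸ hx)
    simp [this]
  rw [prod_insert he, prod_insert he, h1]
  simp [heG]
  ring

lemma wt_nonneg (hp0 : 0 ≤ p) (hp1 : p ≤ 1) (E G : Finset α) :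
    0 ≤ ∏ e ∈ E, (if e ∈ G then p else 1 - p) := by
  refine prod_nonneg fun e _ => ?_
  split_ifs <;> linarith

lemma Ep_mono (hp0 : 0 ≤ p) (hp1 : p ≤ 1) {E : Finset α} {f g : Finset α → ℝ}
    (h : ∀ G ⊆ E, f G ≤ g G) : Ep p E f ≤ Ep p E g :=
  sum_le_sum fun G hG => mul_le_mul_of_nonneg_left (h G (mem_powerset.1 hG))
    (wt_nonneg hp0 hp1 E G)

lemma Ep_congr {E : Finset α} {f g : Finset α → ℝ}
    (h : ∀ G ⊆ E, f G = g G) : Ep p E f = Ep p E g :=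
  sum_congr rfl fun G hG => by rw [h G (mem_powerset.1 hG)]

lemma Ep_mul_right (E : Finset α) (f : Finset α → ℝ) (c : ℝ) :
    Ep p E (fun G => f G * c) = Ep p E f * c := by
  unfold Ep
  rw [sum_mul]
  exact sum_congr rfl fun G _ => by ring

lemma Ep_sum {ι : Type*} (E : Finset α) (s : Finset ι) (f : ι → Finset α → ℝ) :
    Ep p E (fun G => ∑ i ∈ s, f i G) = ∑ i ∈ s, Ep p E (f i) := by
  unfold Ep
  rw [sum_comm]
  exact sum_congr rfl fun G _ => by rw [mul_sum]

lemma Ep_add (E : Finset α) (f g : Finset α → ℝ) :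
    Ep p E (fun G => f G + g G) = Ep p E f + Ep p E g := by
  unfold Ep
  rw [← sum_add_distrib]
  exact sum_congr rfl fun G _ => by ring

lemma Ep_one (E : Finset α) : Ep p E (fun _ => 1) = 1 := by
  induction E using Finset.induction_on with
  | empty => simp [Ep]
  | insert a s ha ih =>
    rw [Ep_insert ha]
    convert ih using 2
    ext; ring

lemma Pp_mono (hp0 : 0 ≤ p) (hp1 : p ≤ 1) {E : Finset α} {A B : Finset α → Prop}
    (h : ∀ G ⊆ E, A G → B G) : Pp p E A ≤ Pp p E B := by
  classical
  refine Ep_mono hp0 hp1 fun G hG => ?_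
  by_cases hA : A G
  · simp [hA, h G hG hA]
  · simp only [hA, if_false]; split_ifs <;> norm_num

lemma Pp_or_le (hp0 : 0 ≤ p) (hp1 : p ≤ 1) (E : Finset α) (A B : Finset α → Prop) :
    Pp p E (fun G => A G ∨ B G) ≤ Pp p E A + Pp p E B := by
  classical
  unfold Pp
  rw [← Ep_add]
  refine Ep_mono hp0 hp1 fun G hG => ?_
  by_cases hA : A G <;> by_cases hB : B G <;> simp [hA, hB]

lemma Pp_exists_le {ι : Type*} (hp0 : 0 ≤ p) (hp1 : p ≤ 1) (E : Finset α) (s : Finset ι)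
    (A : ι → Finset α → Prop) :
    Pp p E (fun G => ∃ i ∈ s, A i G) ≤ ∑ i ∈ s, Pp p E (A i) := by
  classical
  unfold Pp
  rw [← Ep_sum]
  refine Ep_mono hp0 hp1 fun G hG => ?_
  have hnn : ∀ j ∈ s, (0:ℝ) ≤ (if A j G then 1 else 0) := fun j _ => by split_ifs <;> norm_num
  split_ifs with h
  · obtain ⟨i, hi, hA⟩ := h
    have := single_le_sum hnn hi
    simpa [hA] using this
  · exact sum_nonneg hnn

lemma exp_le_add_exp_sq (s : ℝ) : Real.exp s ≤ s + Real.exp (s ^ 2) := by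
  have hq := Real.add_one_le_exp (s ^ 2)
  rcases le_total |s| 1 with h | h
  · have := (abs_le.1 (Real.abs_exp_sub_one_sub_id_le h)).2
    linarith
  · rcases le_abs'.1 h with h | h
    · have : Real.exp s ≤ 1 := Real.exp_le_one_iff.2 (by linarith)
      nlinarith
    · have : Real.exp s ≤ Real.exp (s ^ 2) := Real.exp_le_exp.2 (by nlinarith)
      linarith

/-- Moment generating function of a centred Bernoulli variable. -/
lemma bernoulli_mgf (hp0 : 0 ≤ p) (hp1 : p ≤ 1) (s : ℝ) :
    (1 - p) * Real.exp (s * (-p)) + p * Real.exp (s * (1 - p)) ≤ Real.exp (s ^ 2) := by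
  have h1 := exp_le_add_exp_sq (s * (-p))
  have h2 := exp_le_add_exp_sq (s * (1 - p))
  have h3 : Real.exp ((s * (-p)) ^ 2) ≤ Real.exp (s ^ 2) := by
    refine Real.exp_le_exp.2 ?_
    rw [mul_pow]
    exact mul_le_of_le_one_right (sq_nonneg s) (by nlinarith)
  have h4 : Real.exp ((s * (1 - p)) ^ 2) ≤ Real.exp (s ^ 2) := by
    refine Real.exp_le_exp.2 ?_
    rw [mul_pow]
    exact mul_le_of_le_one_right (sq_nonneg s) (by nlinarith)
  nlinarith [mul_le_mul_of_nonneg_left (h1.trans (add_le_add_right h3 _)) (sub_nonneg.2 hp1),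
    mul_le_mul_of_nonneg_left (h2.trans (add_le_add_right h4 _)) hp0]

/-- Azuma's inequality in exponential form: the elements of `E` are revealed in the order of `r`,
and the coefficient `c e` does not depend on elements of rank at least `r e`. -/
lemma azuma_mgf (hp0 : 0 ≤ p) (hp1 : p ≤ 1) (r : α → ℕ) (E : Finset α)
    (c : α → Finset α → ℝ) (t : α → ℝ) (hc : ∀ e G, |c e G| ≤ t e)
    (hpred : ∀ e f G, r e ≤ r f → c e (insert f G) = c e G) (l : ℝ) :
    Ep p E (fun G => Real.exp (l * ∑ e ∈ E, c e G * xi p e G)) ≤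
      Real.exp (l ^ 2 * ∑ e ∈ E, t e ^ 2) := by
  induction E using Finset.induction_on_max_value r with
  | empty => simp [Ep]
  | insert a s ha hmax ih =>
    rw [Ep_insert ha]
    have key : ∀ G ⊆ s,
        (1 - p) * Real.exp (l * ∑ e ∈ insert a s, c e G * xi p e G) +
          p * Real.exp (l * ∑ e ∈ insert a s, c e (insert a G) * xi p e (insert a G)) ≤
        Real.exp (l * ∑ e ∈ s, c e G * xi p e G) * Real.exp (l ^ 2 * t a ^ 2) := by
      intro G hG
      have haG : a ∉ G := fun h => ha (hG h)
      have h1 : ∑ e ∈ s, c e (insert a G) * xi p e (insert a G) = ∑ e ∈ s, c e G * xi p e G := by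
        refine sum_congr rfl fun e he => ?_
        have : e ≠ a := fun h => ha (h ▸ he)
        rw [hpred e a G (hmax e he)]
        simp [xi, this]
      have hx0 : xi p a G = -p := by simp [xi, haG]
      have hx1 : xi p a (insert a G) = 1 - p := by simp [xi]
      rw [sum_insert ha, sum_insert ha, h1, hpred a a G le_rfl, hx0, hx1]
      set T := ∑ e ∈ s, c e G * xi p e G
      have hb := bernoulli_mgf hp0 hp1 (l * c a G)
      have e1 : Real.exp (l * (c a G * -p + T)) =
          Real.exp (l * T) * Real.exp (l * c a G * -p) := by
        rw [← Real.exp_add]; ring_nf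
      have e2 : Real.exp (l * (c a G * (1 - p) + T)) =
          Real.exp (l * T) * Real.exp (l * c a G * (1 - p)) := by
        rw [← Real.exp_add]; ring_nf
      have h2 : Real.exp ((l * c a G) ^ 2) ≤ Real.exp (l ^ 2 * t a ^ 2) := by
        refine Real.exp_le_exp.2 ?_
        rw [mul_pow]
        refine mul_le_mul_of_nonneg_left ?_ (sq_nonneg l)
        exact sq_le_sq' (abs_le.1 (hc a G)).1 (abs_le.1 (hc a G)).2
      rw [e1, e2]
      calc _ = Real.exp (l * T) * ((1 - p) * Real.exp (l * c a G * -p) +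
            p * Real.exp (l * c a G * (1 - p))) := by ring
        _ ≤ _ := mul_le_mul_of_nonneg_left (hb.trans h2) (Real.exp_pos _).le
    refine (Ep_mono hp0 hp1 key).trans ?_
    rw [Ep_mul_right, sum_insert ha]
    calc _ ≤ Real.exp (l ^ 2 * ∑ e ∈ s, t e ^ 2) * Real.exp (l ^ 2 * t a ^ 2) :=
          mul_le_mul_of_nonneg_right ih (Real.exp_pos _).le
      _ = _ := by rw [← Real.exp_add]; ring_nf

lemma azuma_upper (hp0 : 0 ≤ p) (hp1 : p ≤ 1) (r : α → ℕ) (E : Finset α)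
    (c : α → Finset α → ℝ) (t : α → ℝ) (hc : ∀ e G, |c e G| ≤ t e)
    (hpred : ∀ e f G, r e ≤ r f → c e (insert f G) = c e G) {a V : ℝ} (ha : 0 ≤ a)
    (hV : 0 < V) (htV : ∑ e ∈ E, t e ^ 2 ≤ V) :
    Pp p E (fun G => a < ∑ e ∈ E, c e G * xi p e G) ≤ Real.exp (-(a ^ 2 / (4 * V))) := by
  classical
  -- the optimal parameter in Markov's inequality
  set l := a / (2 * V) with hl
  have hl0 : 0 ≤ l := by positivity
  have h1 : Pp p E (fun G => a < ∑ e ∈ E, c e G * xi p e G) ≤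
      Ep p E (fun G => Real.exp (l * ∑ e ∈ E, c e G * xi p e G) * Real.exp (-(l * a))) := by
    refine Ep_mono hp0 hp1 fun G _ => ?_
    rw [← Real.exp_add]
    split_ifs with h
    · exact Real.one_le_exp (by nlinarith [mul_le_mul_of_nonneg_left h.le hl0])
    · exact (Real.exp_pos _).le
  refine h1.trans ?_
  rw [Ep_mul_right]
  refine (mul_le_mul_of_nonneg_right (azuma_mgf hp0 hp1 r E c t hc hpred l)
    (Real.exp_pos _).le).trans ?_
  rw [← Real.exp_add]
  refine Real.exp_le_exp.2 ?_
  have h2 : l ^ 2 * ∑ e ∈ E, t e ^ 2 ≤ l ^ 2 * V := mul_le_mul_of_nonneg_left htV (sq_nonneg l)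
  have h3 : l ^ 2 * V - l * a = -(a ^ 2 / (4 * V)) := by
    rw [hl]; field_simp; ring
  linarith

lemma azuma_tail (hp0 : 0 ≤ p) (hp1 : p ≤ 1) (r : α → ℕ) (E : Finset α)
    (c : α → Finset α → ℝ) (t : α → ℝ) (hc : ∀ e G, |c e G| ≤ t e)
    (hpred : ∀ e f G, r e ≤ r f → c e (insert f G) = c e G) {a V : ℝ} (ha : 0 ≤ a)
    (hV : 0 < V) (htV : ∑ e ∈ E, t e ^ 2 ≤ V) :
    Pp p E (fun G => a < |∑ e ∈ E, c e G * xi p e G|) ≤ 2 * Real.exp (-(a ^ 2 / (4 * V))) := by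
  have h1 := azuma_upper hp0 hp1 r E c t hc hpred ha hV htV
  have h2 := azuma_upper hp0 hp1 r E (fun e G => -c e G) t (fun e G => by simpa using hc e G)
    (fun e f G h => by simp [hpred e f G h]) ha hV htV
  rw [two_mul]
  refine (Pp_mono hp0 hp1 (fun G _ h => ?_)).trans
    ((Pp_or_le hp0 hp1 E _ _).trans (add_le_add h1 h2))
  simp only [neg_mul, sum_neg_distrib]
  exact lt_abs.1 h

/-- Hoeffding's inequality for a sum of centred bits in which each bit occurs at most twice. -/
lemma linear_tail {ι : Type*} (hp0 : 0 ≤ p) (hp1 : p ≤ 1) (E : Finset α) (J : Finset ι)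
    (e : ι → α) (he : ∀ j ∈ J, e j ∈ E) (hf : ∀ f ∈ E, #{j ∈ J | e j = f} ≤ 2)
    {a B : ℝ} (ha : 0 ≤ a) (hB : 0 < B) (hJ : (#J : ℝ) ≤ B) :
    Pp p E (fun G => a < |∑ j ∈ J, xi p (e j) G|) ≤ 2 * Real.exp (-(a ^ 2 / (8 * B))) := by
  set c : α → ℝ := fun f => (#{j ∈ J | e j = f} : ℝ) with hc
  have hsum : ∀ G, ∑ j ∈ J, xi p (e j) G = ∑ f ∈ E, c f * xi p f G := by
    intro G
    rw [← sum_fiberwise_of_maps_to he]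
    refine sum_congr rfl fun f _ => ?_
    rw [sum_congr rfl (g := fun _ => xi p f G)]
    · simp [hc]
    · intro j hj
      rw [(mem_filter.1 hj).2]
  have hV : ∑ f ∈ E, c f ^ 2 ≤ 2 * B := by
    calc ∑ f ∈ E, c f ^ 2 ≤ ∑ f ∈ E, 2 * c f := by
          refine sum_le_sum fun f hfE => ?_
          have h1 : c f ≤ 2 := by
            have := hf f hfE
            simp only [hc]; exact_mod_cast this
          have h0 : 0 ≤ c f := by positivity
          nlinarith
      _ = 2 * (#J : ℝ) := by
          rw [← mul_sum, card_eq_sum_card_fiberwise he]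
          simp [hc]
      _ ≤ _ := by linarith
  have := azuma_tail hp0 hp1 (fun _ => 0) E (fun f _ => c f) c
    (fun f _ => by rw [abs_of_nonneg]; positivity) (fun _ _ _ _ => rfl) ha
    (by positivity : 0 < 2 * B) hV
  simp only [hsum]
  refine this.trans (le_of_eq ?_)
  ring_nf

/-- Tail bound for a quadratic form in centred bits, with every monomial written so that its
second factor has the larger rank. The coefficient of a bit is a sum of at most `B` earlier bits;
it is truncated at `t`, and by `linear_tail` the truncation is rarely active. -/
lemma quad_tail_ordered {ι : Type*} (hp0 : 0 ≤ p) (hp1 : p ≤ 1) (E : Finset α) (I : Finset ι)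
    (r : α → ℕ) (e₁ e₂ : ι → α) (h₁ : ∀ i ∈ I, e₁ i ∈ E) (h₂ : ∀ i ∈ I, e₂ i ∈ E)
    (hr : ∀ i ∈ I, r (e₁ i) < r (e₂ i))
    (hinj : ∀ i ∈ I, ∀ j ∈ I, e₁ i = e₁ j → e₂ i = e₂ j → i = j)
    {a t B m : ℝ} (ha : 0 ≤ a) (ht : 0 < t) (hB : 0 < B) (hm : 0 < m) (hE : (#E : ℝ) ≤ m)
    (hfib : ∀ f ∈ E, (#{i ∈ I | e₂ i = f} : ℝ) ≤ B) :
    Pp p E (fun G => a < |∑ i ∈ I, xi p (e₁ i) G * xi p (e₂ i) G|) ≤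
      2 * Real.exp (-(a ^ 2 / (4 * (m * t ^ 2)))) + m * (2 * Real.exp (-(t ^ 2 / (8 * B)))) := by
  classical
  set c : α → Finset α → ℝ := fun f G => ∑ i ∈ I with e₂ i = f, xi p (e₁ i) G with hc
  set ct : α → Finset α → ℝ := fun f G => if |c f G| ≤ t then c f G else 0 with hct
  have hsum : ∀ G, ∑ i ∈ I, xi p (e₁ i) G * xi p (e₂ i) G = ∑ f ∈ E, c f G * xi p f G := by
    intro G
    rw [← sum_fiberwise_of_maps_to h₂]
    refine sum_congr rfl fun f _ => ?_
    simp only [hc]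
    rw [sum_mul]
    exact sum_congr rfl fun i hi => by rw [(mem_filter.1 hi).2]
  have hpred : ∀ e f G, r e ≤ r f → c e (insert f G) = c e G := by
    intro e f G hef
    refine sum_congr rfl fun i hi => ?_
    obtain ⟨hiI, hie⟩ := mem_filter.1 hi
    have h := hr i hiI
    have : e₁ i ≠ f := by rintro rfl; rw [hie] at h; omega
    simp [xi, this]
  have h1 := azuma_tail hp0 hp1 r E ct (fun _ => t)
    (fun e G => by
      simp only [hct]; split_ifs with h
      · exact h
      · simpa using ht.le)
    (fun e f G h => by simp only [hct, hpred e f G h]) ha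
    (by positivity : 0 < m * t ^ 2)
    (by rw [sum_const, nsmul_eq_mul]; exact mul_le_mul_of_nonneg_right hE (sq_nonneg t))
  have h2 : ∀ f ∈ E, Pp p E (fun G => t < |c f G|) ≤ 2 * Real.exp (-(t ^ 2 / (8 * B))) := by
    intro f hf
    refine linear_tail hp0 hp1 E _ e₁ (fun j hj => h₁ j (mem_filter.1 hj).1) ?_ ht.le hB
      (hfib f hf)
    intro g _
    refine (card_le_one.2 ?_).trans one_le_two
    intro i hi j hj
    simp only [mem_filter] at hi hj
    exact hinj i hi.1.1 j hj.1.1 (hi.2.trans hj.2.symm) (hi.1.2.trans hj.1.2.symm)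
  have h3 : Pp p E (fun G => ∃ f ∈ E, t < |c f G|) ≤ m * (2 * Real.exp (-(t ^ 2 / (8 * B)))) := by
    refine (Pp_exists_le hp0 hp1 E E _).trans ((sum_le_sum h2).trans ?_)
    rw [sum_const, nsmul_eq_mul]
    exact mul_le_mul_of_nonneg_right hE (by positivity)
  refine (Pp_mono hp0 hp1 (fun G _ h => ?_)).trans
    ((Pp_or_le hp0 hp1 E _ _).trans (add_le_add h1 h3))
  by_cases hb : ∃ f ∈ E, t < |c f G|
  · exact Or.inr hb
  · left
    push Not at hb
    rw [hsum] at h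
    rwa [sum_congr rfl (g := fun f => c f G * xi p f G)]
    intro f hf
    simp only [hct, hb f hf, if_true]

/-- The monomials are split by which of the two factors has the larger rank, and
`quad_tail_ordered` is applied to each half. -/
lemma quad_tail {ι : Type*} [Finite α] (hp0 : 0 ≤ p) (hp1 : p ≤ 1) (E : Finset α) (I : Finset ι)
    (e₁ e₂ : ι → α) (h₁ : ∀ i ∈ I, e₁ i ∈ E) (h₂ : ∀ i ∈ I, e₂ i ∈ E)
    (hne : ∀ i ∈ I, e₁ i ≠ e₂ i)
    (hinj : ∀ i ∈ I, ∀ j ∈ I, e₁ i = e₁ j → e₂ i = e₂ j → i = j)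
    {a t B m : ℝ} (ha : 0 ≤ a) (ht : 0 < t) (hB : 0 < B) (hm : 0 < m) (hE : (#E : ℝ) ≤ m)
    (hfib₁ : ∀ f ∈ E, (#{i ∈ I | e₁ i = f} : ℝ) ≤ B)
    (hfib₂ : ∀ f ∈ E, (#{i ∈ I | e₂ i = f} : ℝ) ≤ B) :
    Pp p E (fun G => 2 * a < |∑ i ∈ I, xi p (e₁ i) G * xi p (e₂ i) G|) ≤
      2 * (2 * Real.exp (-(a ^ 2 / (4 * (m * t ^ 2)))) +
        m * (2 * Real.exp (-(t ^ 2 / (8 * B))))) := by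
  classical
  obtain ⟨r, hrinj⟩ : ∃ r : α → ℕ, Function.Injective r := Countable.exists_injective_nat α
  have hsub : ∀ (P : ι → Prop) [DecidablePred P] (e : ι → α) (f : α),
      (#{i ∈ I | e i = f} : ℝ) ≤ B → (#{i ∈ I.filter P | e i = f} : ℝ) ≤ B := by
    intro P _ e f h
    refine le_trans ?_ h
    exact_mod_cast card_le_card (filter_subset_filter _ (filter_subset _ _))
  have hA := quad_tail_ordered hp0 hp1 E (I.filter fun i => r (e₁ i) < r (e₂ i)) r e₁ e₂
    (fun i hi => h₁ i (mem_filter.1 hi).1) (fun i hi => h₂ i (mem_filter.1 hi).1)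
    (fun i hi => (mem_filter.1 hi).2)
    (fun i hi j hj => hinj i (mem_filter.1 hi).1 j (mem_filter.1 hj).1) ha ht hB hm hE
    (fun f hf => hsub _ e₂ f (hfib₂ f hf))
  have hC := quad_tail_ordered hp0 hp1 E (I.filter fun i => ¬ r (e₁ i) < r (e₂ i)) r e₂ e₁
    (fun i hi => h₂ i (mem_filter.1 hi).1) (fun i hi => h₁ i (mem_filter.1 hi).1)
    (fun i hi => by
      have h := (mem_filter.1 hi).2
      have h' := hrinj.ne (hne i (mem_filter.1 hi).1)
      omega)
    (fun i hi j hj h h' => hinj i (mem_filter.1 hi).1 j (mem_filter.1 hj).1 h' h) ha ht hB hm hE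
    (fun f hf => hsub _ e₁ f (hfib₁ f hf))
  rw [two_mul (2 * Real.exp _ + _)]
  refine (Pp_mono hp0 hp1 (fun G _ h => ?_)).trans
    ((Pp_or_le hp0 hp1 E _ _).trans (add_le_add hA hC))
  by_contra hcon
  rw [not_or, not_lt, not_lt] at hcon
  rw [← sum_filter_add_sum_filter_not I (fun i => r (e₁ i) < r (e₂ i))] at h
  have h5 := abs_add_le (∑ i ∈ I with r (e₁ i) < r (e₂ i), xi p (e₁ i) G * xi p (e₂ i) G)
    (∑ i ∈ I with ¬ r (e₁ i) < r (e₂ i), xi p (e₁ i) G * xi p (e₂ i) G)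
  simp only [mul_comm (xi p (e₂ _) G)] at hcon
  linarith [hcon.1, hcon.2]

end Bits

/-! ### From independent bits to random subsets of fixed size -/

lemma factorial_mul_pow_le (a j : ℕ) :
    a.factorial * a ^ j ≤ j.factorial * a ^ a := by
  rcases le_total a j with h | h
  · have h1 := Nat.factorial_mul_pow_sub_le_factorial h
    calc a.factorial * a ^ j = (a.factorial * a ^ (j - a)) * a ^ a := by
          rw [mul_assoc, ← pow_add, Nat.sub_add_cancel h]
      _ ≤ _ := Nat.mul_le_mul_right _ h1
  · have h1 := Nat.factorial_mul_descFactorial (Nat.sub_le a j)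
    rw [Nat.sub_sub_self h] at h1
    calc a.factorial * a ^ j ≤ (j.factorial * a ^ (a - j)) * a ^ j := by
          rw [← h1]
          gcongr
          exact Nat.descFactorial_le_pow _ _
      _ = _ := by rw [mul_assoc, ← pow_add, Nat.sub_add_cancel h]

/-- The mode of a binomial distribution with integer mean is its mean. -/
lemma binomial_mode {m M j : ℕ} (hM : M ≤ m) (hj : j ≤ m) :
    m.choose j * (M ^ j * (m - M) ^ (m - j)) ≤ m.choose M * (M ^ M * (m - M) ^ (m - M)) := by
  have h1 := factorial_mul_pow_le M j
  have h2 := factorial_mul_pow_le (m - M) (m - j)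
  have h3 := Nat.choose_mul_factorial_mul_factorial hM
  have h4 := Nat.choose_mul_factorial_mul_factorial hj
  have hpos : 0 < j.factorial * (m - j).factorial * (M.factorial * (m - M).factorial) := by
    positivity
  refine Nat.le_of_mul_le_mul_left ?_ hpos
  calc _ = (m.choose j * j.factorial * (m - j).factorial) *
        ((M.factorial * M ^ j) * ((m - M).factorial * (m - M) ^ (m - j))) := by ring
    _ ≤ (m.choose j * j.factorial * (m - j).factorial) *
        ((j.factorial * M ^ M) * ((m - j).factorial * (m - M) ^ (m - M))) := by gcongr
    _ = (m.choose M * M.factorial * (m - M).factorial) *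
        ((j.factorial * M ^ M) * ((m - j).factorial * (m - M) ^ (m - M))) := by rw [h3, h4]
    _ = _ := by ring

lemma one_le_binomial_mode {m M : ℕ} (hm : 0 < m) (hM : M ≤ m) :
    1 ≤ ((m : ℝ) + 1) * (m.choose M * (((M : ℝ) / m) ^ M * (1 - (M : ℝ) / m) ^ (m - M))) := by
  have hm' : (0:ℝ) < m := by exact_mod_cast hm
  have hq : 1 - (M : ℝ) / m = ((m - M : ℕ) : ℝ) / m := by
    rw [Nat.cast_sub hM]; field_simp
  have key : ∀ j ∈ range (m + 1),
      ((M : ℝ) / m) ^ j * (1 - (M : ℝ) / m) ^ (m - j) * (m.choose j : ℝ) ≤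
      m.choose M * (((M : ℝ) / m) ^ M * (1 - (M : ℝ) / m) ^ (m - M)) := by
    intro j hj
    have hj' : j ≤ m := by simpa [Nat.lt_succ_iff] using hj
    have h := binomial_mode hM hj'
    have h' : (m.choose j : ℝ) * ((M:ℝ) ^ j * ((m - M : ℕ) : ℝ) ^ (m - j)) ≤
      m.choose M * ((M:ℝ) ^ M * ((m - M : ℕ) : ℝ) ^ (m - M)) := by exact_mod_cast h
    have e : ∀ i ≤ m, ((M : ℝ) / m) ^ i * (1 - (M : ℝ) / m) ^ (m - i) =
        ((M:ℝ) ^ i * ((m - M : ℕ) : ℝ) ^ (m - i)) / (m:ℝ) ^ m := by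
      intro i hi
      rw [hq, div_pow, div_pow, div_mul_div_comm, ← pow_add, Nat.add_sub_cancel' hi]
    rw [e j hj', e M hM, mul_comm, ← mul_div_assoc, ← mul_div_assoc]
    gcongr
  have h1 := sum_le_sum key
  rw [← add_pow] at h1
  simpa using h1

lemma wt_eq {α : Type*} [DecidableEq α] (p : ℝ) {E G : Finset α} (hG : G ⊆ E) :
    (∏ e ∈ E, if e ∈ G then p else 1 - p) = p ^ #G * (1 - p) ^ (#E - #G) := by
  rw [prod_ite, prod_const, prod_const, filter_mem_eq_inter, inter_eq_right.2 hG,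
    filter_not, filter_mem_eq_inter, inter_eq_right.2 hG, card_sdiff_of_subset hG]

open Classical in
/-- Passing from independent bits with density `M / #E` to a uniform `M`-subset of `E` costs a
factor at most `#E + 1`. -/
lemma transfer {α : Type*} [DecidableEq α] (E : Finset α) {M : ℕ} (hE : 0 < #E) (hM : M ≤ #E)
    (A : Finset α → Prop) :
    (#{G ∈ E.powersetCard M | A G} : ℝ) ≤
      (#(E.powersetCard M) : ℝ) * (((#E : ℝ) + 1) * Pp ((M : ℝ) / #E) E A) := by
  have hE' : (0:ℝ) < #E := by exact_mod_cast hE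
  set p : ℝ := (M : ℝ) / #E with hp
  have hp0 : 0 ≤ p := by positivity
  have hp1 : p ≤ 1 := by
    rw [hp, div_le_one hE']; exact_mod_cast hM
  set w : ℝ := p ^ M * (1 - p) ^ (#E - M) with hw
  have hmode := one_le_binomial_mode hE hM
  rw [← hp, ← hw] at hmode
  have h1 : (#{G ∈ E.powersetCard M | A G} : ℝ) * w ≤ Pp p E A := by
    calc (#{G ∈ E.powersetCard M | A G} : ℝ) * w
        = ∑ G ∈ E.powersetCard M with A G,
          (∏ e ∈ E, if e ∈ G then p else 1 - p) * (if A G then 1 else 0) := by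
          rw [← nsmul_eq_mul, ← sum_const]
          refine sum_congr rfl fun G hG => ?_
          obtain ⟨h1, h2⟩ := mem_filter.1 hG
          obtain ⟨h3, h4⟩ := mem_powersetCard.1 h1
          rw [wt_eq p h3, h4, if_pos h2, mul_one]
      _ ≤ _ := by
          refine sum_le_sum_of_subset_of_nonneg ?_ ?_
          · intro G hG
            exact mem_powerset.2 (mem_powersetCard.1 (mem_filter.1 hG).1).1
          · intro G _ _
            refine mul_nonneg (wt_nonneg hp0 hp1 E G) ?_
            split_ifs <;> norm_num
  rw [card_powersetCard]
  calc (#{G ∈ E.powersetCard M | A G} : ℝ)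
      ≤ (#{G ∈ E.powersetCard M | A G} : ℝ) * (((#E : ℝ) + 1) * ((#E).choose M * w)) :=
        le_mul_of_one_le_right (by positivity) hmode
    _ = ((#E).choose M * ((#E : ℝ) + 1)) * ((#{G ∈ E.powersetCard M | A G} : ℝ) * w) := by ring
    _ ≤ ((#E).choose M * ((#E : ℝ) + 1)) * Pp p E A := by gcongr
    _ = _ := by ring

/-! ### Degree sums in the binomial random graph -/

/-- The centred number of neighbours of `v` in `T`. -/
def adeg {n : ℕ} (p : ℝ) (T : Finset (Fin n)) (v : Fin n) (G : Finset (Sym2 (Fin n))) : ℝ :=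
  ∑ w ∈ T.erase v, xi p s(v, w) G

/-- The part of `∑ x ∈ P, adeg p T x G * adeg p T' x G` coming from pairs of distinct edges. -/
def cherryForm {n : ℕ} (p : ℝ) (P T T' : Finset (Fin n)) (G : Finset (Sym2 (Fin n))) : ℝ :=
  ∑ x ∈ P, ∑ y ∈ T.erase x, ∑ z ∈ (T'.erase x).erase y, xi p s(x, y) G * xi p s(x, z) G

lemma mem_completeEdges {n : ℕ} {u v : Fin n} : s(u, v) ∈ completeEdges n ↔ u ≠ v := by
  simp [completeEdges]

lemma card_completeEdges (n : ℕ) : (#(completeEdges n) : ℝ) = Nr n := by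
  have h1 : completeEdges n = (⊤ : SimpleGraph (Fin n)).edgeFinset := by
    ext e
    induction e with
    | h u v => simp [completeEdges]
  rw [h1, SimpleGraph.card_edgeFinset_top_eq_card_choose_two, Fintype.card_fin,
    Nat.cast_choose_two]
  rfl

section Graph

variable {n : ℕ} {p : ℝ}

lemma deg_tail (hp0 : 0 ≤ p) (hp1 : p ≤ 1) (hn : 0 < n) {L : ℝ} (hL : 0 < L)
    (T : Finset (Fin n)) (v : Fin n) :
    Pp p (completeEdges n) (fun G => Real.sqrt n * L < |adeg p T v G|) ≤
      2 * Real.exp (-(L ^ 2 / 8)) := by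
  have hn' : (0:ℝ) < n := by exact_mod_cast hn
  refine (linear_tail hp0 hp1 (completeEdges n) (T.erase v) (fun w => s(v, w)) ?_ ?_
    (by positivity) hn' ?_).trans (le_of_eq ?_)
  · intro w hw
    exact mem_completeEdges.2 (ne_of_mem_erase hw).symm
  · intro f _
    refine (card_le_one.2 ?_).trans one_le_two
    intro i hi j hj
    have := (mem_filter.1 hi).2.trans (mem_filter.1 hj).2.symm
    exact Sym2.congr_right.1 this
  · have := card_le_univ (T.erase v)
    rw [Fintype.card_fin] at this
    exact_mod_cast this
  · rw [mul_pow, Real.sq_sqrt hn'.le]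
    congr 3
    field_simp

lemma lin_tail (hp0 : 0 ≤ p) (hp1 : p ≤ 1) (hn : 0 < n) {L : ℝ} (hL : 0 < L)
    (P T : Finset (Fin n)) :
    Pp p (completeEdges n) (fun G => n * L < |∑ x ∈ P, adeg p T x G|) ≤
      2 * Real.exp (-(L ^ 2 / 8)) := by
  have hn' : (0:ℝ) < n := by exact_mod_cast hn
  have h := linear_tail hp0 hp1 (completeEdges n) (P.sigma fun x => T.erase x)
    (fun j => s(j.1, j.2)) (a := n * L) (B := (n:ℝ) ^ 2) ?_ ?_
    (by positivity) (by positivity) ?_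
  · simp only [sum_sigma] at h
    refine h.trans (le_of_eq ?_)
    congr 3
    field_simp
  · rintro ⟨x, y⟩ hj
    simp only [mem_sigma, mem_erase] at hj
    exact mem_completeEdges.2 hj.2.1.symm
  · intro f _
    induction f with
    | h u v =>
      have : ((P.sigma fun x => T.erase x).filter fun j => s(j.1, j.2) = s(u, v)) ⊆
          {⟨u, v⟩, ⟨v, u⟩} := by
        rintro ⟨x, y⟩ hj
        have := (mem_filter.1 hj).2
        simp only [Sym2.eq_iff] at this
        rcases this with ⟨rfl, rfl⟩ | ⟨rfl, rfl⟩ <;> simp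
      exact (card_le_card this).trans card_le_two
  · have := card_le_univ (P.sigma fun x => T.erase x)
    simp only [Fintype.card_sigma, Fintype.card_fin, sum_const, card_univ, smul_eq_mul] at this
    rw [pow_two]
    exact_mod_cast this

/-- A cherry is determined by its two edges, so the off-diagonal form has the shape required by
`quad_tail`; every edge is the first edge of at most `2 * n` of the cherries, and likewise the
second. -/
lemma cherryForm_tail (hp0 : 0 ≤ p) (hp1 : p ≤ 1) (hn : 0 < n) {L : ℝ} (hL : 0 < L)
    (P T T' : Finset (Fin n)) :
    Pp p (completeEdges n) (fun G => 2 * (n * Real.sqrt n * L ^ 2) < |cherryForm p P T T' G|) ≤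
      2 * (2 * Real.exp (-(L ^ 2 / 4)) + (n:ℝ) ^ 2 * (2 * Real.exp (-(L ^ 2 / 16)))) := by
  have hn' : (0:ℝ) < n := by exact_mod_cast hn
  set I : Finset (Σ _ : Fin n, Σ _ : Fin n, Fin n) :=
    P.sigma fun x => (T.erase x).sigma fun y => (T'.erase x).erase y with hI
  have hmem : ∀ i ∈ I, i.2.1 ≠ i.1 ∧ i.2.2 ≠ i.1 ∧ i.2.2 ≠ i.2.1 := by
    rintro ⟨x, y, z⟩ hi
    simp only [hI, mem_sigma, mem_erase] at hi
    tauto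
  have hfib : ∀ (g h : (Σ _ : Fin n, Σ _ : Fin n, Fin n) → Fin n)
      (_ : ∀ i j, i.1 = j.1 → g i = g j → h i = h j → i = j),
      ∀ f ∈ completeEdges n, (#{i ∈ I | s(i.1, g i) = f} : ℝ) ≤ 2 * n := by
    intro g h hgh f _
    induction f with
    | h u v =>
      have h1 : #{i ∈ I | s(i.1, g i) = s(u, v)} ≤ #(({u, v} : Finset (Fin n)) ×ˢ
          (univ : Finset (Fin n))) := by
        refine card_le_card_of_injOn (fun i => (i.1, h i)) ?_ ?_
        · intro i hi
          have := (mem_filter.1 hi).2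
          simp only [Sym2.eq_iff] at this
          simp only [coe_product, Set.mem_prod, coe_univ, Set.mem_univ, and_true, mem_coe,
            mem_insert, mem_singleton]
          tauto
        · intro i hi j hj hij
          simp only [Prod.mk.injEq] at hij
          have h2 := (mem_filter.1 hi).2.trans (mem_filter.1 hj).2.symm
          rw [hij.1] at h2
          exact hgh i j hij.1 (Sym2.congr_right.1 h2) hij.2
      rw [card_product, card_univ, Fintype.card_fin] at h1
      have h3 : #({u, v} : Finset (Fin n)) ≤ 2 := card_le_two
      have h4 : #{i ∈ I | s(i.1, g i) = s(u, v)} ≤ 2 * n := h1.trans (Nat.mul_le_mul_right _ h3)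
      exact_mod_cast h4
  have hcard : (#(completeEdges n) : ℝ) ≤ (n:ℝ) ^ 2 := by
    rw [card_completeEdges, Nr]
    nlinarith
  have h := quad_tail hp0 hp1 (completeEdges n) I (fun i => s(i.1, i.2.1))
    (fun i => s(i.1, i.2.2)) (a := n * Real.sqrt n * L ^ 2) (t := Real.sqrt n * L)
    (B := 2 * n) (m := (n:ℝ) ^ 2)
    (fun i hi => mem_completeEdges.2 (hmem i hi).1.symm)
    (fun i hi => mem_completeEdges.2 (hmem i hi).2.1.symm)
    (fun i hi heq => (hmem i hi).2.2 (Sym2.congr_right.1 heq).symm)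
    ?_ (by positivity) (by positivity) (by positivity) (by positivity) hcard
    (hfib (fun i => i.2.1) (fun i => i.2.2) ?_) (hfib (fun i => i.2.2) (fun i => i.2.1) ?_)
  · simp only [hI, sum_sigma] at h
    refine h.trans (le_of_eq ?_)
    have hs := Real.sq_sqrt hn'.le
    have e1 : (n * Real.sqrt n * L ^ 2) ^ 2 / (4 * ((n:ℝ) ^ 2 * (Real.sqrt n * L) ^ 2)) =
        L ^ 2 / 4 := by
      rw [mul_pow, mul_pow, mul_pow, hs]; field_simp
    have e2 : (Real.sqrt n * L) ^ 2 / (8 * (2 * n)) = L ^ 2 / 16 := by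
      rw [mul_pow, hs]; field_simp; norm_num
    rw [e1, e2]
  · rintro ⟨x, y, z⟩ hi ⟨x', y', z'⟩ hj h1 h2
    have := hmem _ hi
    have := hmem _ hj
    simp only [Sym2.eq_iff] at *
    rcases h1 with ⟨rfl, rfl⟩ | ⟨rfl, rfl⟩ <;> rcases h2 with ⟨h3, rfl⟩ | ⟨rfl, h4⟩ <;>
      simp_all
  · rintro ⟨x, y, z⟩ ⟨x', y', z'⟩ h1 h2 h3
    simp only at h1 h2 h3
    subst h1 h2 h3; rfl
  · rintro ⟨x, y, z⟩ ⟨x', y', z'⟩ h1 h2 h3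
    simp only at h1 h2 h3
    subst h1 h2 h3; rfl

lemma xi_sq (e : Sym2 (Fin n)) (G : Finset (Sym2 (Fin n))) :
    xi p e G ^ 2 = (1 - 2 * p) * xi p e G + p * (1 - p) := by
  unfold xi
  split_ifs <;> ring

lemma sum_adeg_mul (P T T' : Finset (Fin n)) (G : Finset (Sym2 (Fin n))) :
    ∑ x ∈ P, adeg p T x G * adeg p T' x G =
      cherryForm p P T T' G + (1 - 2 * p) * ∑ x ∈ P, adeg p (T ∩ T') x G +
        p * (1 - p) * ∑ x ∈ P, (#((T ∩ T').erase x) : ℝ) := by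
  unfold cherryForm
  rw [mul_sum, mul_sum, ← sum_add_distrib, ← sum_add_distrib]
  refine sum_congr rfl fun x _ => ?_
  have h1 : ∀ y ∈ T.erase x, xi p s(x, y) G * adeg p T' x G =
      ∑ z ∈ (T'.erase x).erase y, xi p s(x, y) G * xi p s(x, z) G +
        if y ∈ T' then xi p s(x, y) G ^ 2 else 0 := by
    intro y hy
    unfold adeg
    rw [← mul_sum]
    split_ifs with h
    · rw [← sum_erase_add _ _ (mem_erase.2 ⟨(mem_erase.1 hy).1, h⟩)]
      ring
    · rw [erase_eq_of_notMem (a := y)]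
      · ring
      · simp [h]
  have h2 : adeg p T x G * adeg p T' x G =
      ∑ y ∈ T.erase x, xi p s(x, y) G * adeg p T' x G := by
    rw [← sum_mul]; rfl
  have h3 : (T.erase x).filter (· ∈ T') = (T ∩ T').erase x := by
    ext y; simp; tauto
  rw [h2, sum_congr rfl h1, sum_add_distrib, ← sum_filter, h3]
  simp only [xi_sq, sum_add_distrib, ← mul_sum, sum_const, nsmul_eq_mul]
  unfold adeg
  ring

lemma abs_sum_adeg_mul_sub_le (hp0 : 0 ≤ p) (hp1 : p ≤ 1) (P T T' : Finset (Fin n))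
    (G : Finset (Sym2 (Fin n))) :
    |∑ x ∈ P, adeg p T x G * adeg p T' x G - p * (1 - p) * ∑ x ∈ P, (#((T ∩ T').erase x) : ℝ)| ≤
      |cherryForm p P T T' G| + |∑ x ∈ P, adeg p (T ∩ T') x G| := by
  rw [sum_adeg_mul, add_sub_cancel_right]
  refine (abs_add_le _ _).trans (add_le_add_right ?_ _)
  rw [abs_mul]
  exact mul_le_of_le_one_left (abs_nonneg _) (abs_le.2 ⟨by linarith, by linarith⟩)

end Graph

/-! ### The effect of a swap -/

/-- The two sides `S` (for `true`) and `Sᶜ` (for `false`) of the partition given by `S`. -/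
def side {n : ℕ} (S : Finset (Fin n)) (b : Bool) : Finset (Fin n) := if b then S else Sᶜ

/-- The centred degrees into `S`, respectively minus the centred degrees into `Sᶜ`. With these
signs both increments of a swap have the same form, see `swapInc`. -/
def sdeg {n : ℕ} (p : ℝ) (S : Finset (Fin n)) (G : Finset (Sym2 (Fin n))) (b : Bool)
    (v : Fin n) : ℝ :=
  (if b then 1 else -1) * adeg p (side S b) v G

/-- The increment of `e(S)` (for `true`) or of `e(Sᶜ)` (for `false`) when `x ∈ S` and `y ∈ Sᶜ`
are exchanged. -/
def swapInc {n : ℕ} (p : ℝ) (S : Finset (Fin n)) (G : Finset (Sym2 (Fin n))) (b : Bool)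
    (x y : Fin n) : ℝ :=
  sdeg p S G b y - sdeg p S G b x - xi p s(x, y) G

section Swap

variable {n : ℕ} {p : ℝ}

lemma edgesIn_insert {G : Finset (Sym2 (Fin n))} (hG : G ⊆ completeEdges n)
    {S : Finset (Fin n)} {v : Fin n} (hv : v ∉ S) :
    edgesIn G (insert v S) = edgesIn G S + dS G S v := by
  classical
  unfold edgesIn dS
  have h1 : #{w ∈ S | s(v, w) ∈ G} = #({w ∈ S | s(v, w) ∈ G}.image fun w => s(v, w)) := by
    rw [card_image_of_injective]
    intro a b h
    exact Sym2.congr_right.1 h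
  rw [h1, ← card_union_of_disjoint]
  · congr 1
    ext e
    induction e with
    | h a b =>
      simp only [mem_filter, Sym2.mem_iff, forall_eq_or_imp, forall_eq, mem_insert, mem_union,
        mem_image, Sym2.eq_iff]
      constructor
      · rintro ⟨hab, ha, hb⟩
        have hne := mem_completeEdges.1 (hG hab)
        rcases ha with rfl | ha <;> rcases hb with rfl | hb
        · exact absurd rfl hne
        · exact Or.inr ⟨b, ⟨hb, hab⟩, Or.inl ⟨rfl, rfl⟩⟩
        · exact Or.inr ⟨a, ⟨ha, by rwa [Sym2.eq_swap]⟩, Or.inr ⟨rfl, rfl⟩⟩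
        · exact Or.inl ⟨hab, ha, hb⟩
      · rintro (⟨hab, ha, hb⟩ | ⟨w, ⟨hw, hvw⟩, ⟨rfl, rfl⟩ | ⟨rfl, rfl⟩⟩)
        · exact ⟨hab, Or.inr ha, Or.inr hb⟩
        · exact ⟨hvw, Or.inl rfl, Or.inr hw⟩
        · exact ⟨by rwa [Sym2.eq_swap], Or.inr hw, Or.inl rfl⟩
  · rw [disjoint_left]
    intro e he he'
    obtain ⟨w, _, rfl⟩ := mem_image.1 he'
    exact hv ((mem_filter.1 he).2 v (by simp))

lemma dS_eq (G : Finset (Sym2 (Fin n))) (S : Finset (Fin n)) (v : Fin n) :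
    (dS G S v : ℝ) = ∑ w ∈ S, xi p s(v, w) G + p * #S := by
  classical
  unfold dS xi
  rw [sum_sub_distrib, sum_const, nsmul_eq_mul, card_filter]
  push_cast
  ring

lemma edgesIn_swap {G : Finset (Sym2 (Fin n))} (hG : G ⊆ completeEdges n)
    {S : Finset (Fin n)} {x y : Fin n} (hx : x ∈ S) (hy : y ∉ S) :
    (edgesIn G (insert y (S.erase x)) : ℝ) - edgesIn G S =
      adeg p S y G - adeg p S x G - xi p s(x, y) G := by
  have h1 := edgesIn_insert hG (S := S.erase x) (v := y) (by simp [hy])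
  have h2 := edgesIn_insert hG (S := S.erase x) (v := x) (by simp)
  rw [insert_erase hx] at h2
  rw [h1, h2]
  push_cast
  rw [dS_eq (p := p), dS_eq (p := p)]
  unfold adeg
  rw [erase_eq_of_notMem hy, ← sum_erase_add S _ hx, Sym2.eq_swap (a := x) (b := y)]
  ring

lemma swapInc_true {G : Finset (Sym2 (Fin n))} (hG : G ⊆ completeEdges n)
    {S : Finset (Fin n)} {x y : Fin n} (hx : x ∈ S) (hy : y ∉ S) (M k : ℕ) :
    Wfun n M k G (insert y (S.erase x)) - Wfun n M k G S = swapInc p S G true x y / n := by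
  have h := edgesIn_swap (p := p) hG hx hy
  simp only [Wfun, swapInc, sdeg, side, if_true, one_mul]
  rw [← h]
  ring

lemma swapInc_false {G : Finset (Sym2 (Fin n))} (hG : G ⊆ completeEdges n)
    {S : Finset (Fin n)} {x y : Fin n} (hx : x ∈ S) (hy : y ∉ S) (M k : ℕ) :
    Wfun n M k G (insert x (Sᶜ.erase y)) - Wfun n M k G Sᶜ = swapInc p S G false x y / n := by
  have h := edgesIn_swap (p := p) hG (S := Sᶜ) (x := y) (y := x) (by simp [hy]) (by simp [hx])
  simp only [Wfun, swapInc, sdeg, side, Bool.false_eq_true, if_false]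
  rw [Sym2.eq_swap] at h
  have : -1 * adeg p Sᶜ y G - -1 * adeg p Sᶜ x G - xi p s(x, y) G =
      adeg p Sᶜ x G - adeg p Sᶜ y G - xi p s(x, y) G := by ring
  rw [this, ← h]
  ring

lemma abs_xi_le (hp0 : 0 ≤ p) (hp1 : p ≤ 1) (e : Sym2 (Fin n)) (G : Finset (Sym2 (Fin n))) :
    |xi p e G| ≤ 1 := by
  unfold xi
  rw [abs_le]
  split_ifs <;> constructor <;> linarith

lemma abs_sdeg (S : Finset (Fin n)) (G : Finset (Sym2 (Fin n))) (b : Bool) (v : Fin n) :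
    |sdeg p S G b v| = |adeg p (side S b) v G| := by
  unfold sdeg
  cases b <;> simp

lemma abs_adeg_le (hp0 : 0 ≤ p) (hp1 : p ≤ 1) (T : Finset (Fin n)) (v : Fin n)
    (G : Finset (Sym2 (Fin n))) : |adeg p T v G| ≤ n := by
  unfold adeg
  refine (abs_sum_le_sum_abs _ _).trans ((sum_le_sum fun w _ => abs_xi_le hp0 hp1 _ G).trans ?_)
  rw [sum_const, nsmul_eq_mul, mul_one]
  have := card_le_univ (T.erase v)
  rw [Fintype.card_fin] at this
  exact_mod_cast this

lemma abs_swapInc_le (hp0 : 0 ≤ p) (hp1 : p ≤ 1) (S : Finset (Fin n))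
    (G : Finset (Sym2 (Fin n))) (b : Bool) (x y : Fin n) : |swapInc p S G b x y| ≤ 3 * n := by
  have hn : (1:ℝ) ≤ n := by exact_mod_cast x.pos
  have h1 := abs_adeg_le hp0 hp1 (side S b) x G
  have h2 := abs_adeg_le hp0 hp1 (side S b) y G
  rw [← abs_sdeg] at h1 h2
  have h3 := abs_xi_le hp0 hp1 s(x, y) G
  unfold swapInc
  rw [abs_le] at *
  constructor <;> linarith [h1.1, h1.2, h2.1, h2.2, h3.1, h3.2]

/-- The properties of a set `S` relative to the graph `G`, expressed through the centred degrees,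
that control the conditional second moments of a swap. Here `L` is a factor `n ^ o(1)`. -/
def Good (p L : ℝ) (S : Finset (Fin n)) (G : Finset (Sym2 (Fin n))) : Prop :=
  (∀ i : Bool × Fin n, |adeg p (side S i.1) i.2 G| ≤ Real.sqrt n * L) ∧
  (∀ i : Bool × Bool, |∑ x ∈ side S i.1, adeg p (side S i.2) x G| ≤ n * L) ∧
  (∀ i : Bool × Bool × Bool, |cherryForm p (side S i.1) (side S i.2.1) (side S i.2.2) G| ≤
    2 * (n * Real.sqrt n * L ^ 2))

lemma bad_prob (hp0 : 0 ≤ p) (hp1 : p ≤ 1) (hn : 0 < n) {L : ℝ} (hL : 0 < L)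
    (S : Finset (Fin n)) :
    Pp p (completeEdges n) (fun G => ¬ Good p L S G) ≤
      80 * (n:ℝ) ^ 2 * Real.exp (-(L ^ 2 / 16)) := by
  have hn' : (1:ℝ) ≤ n := by exact_mod_cast hn
  set X := Real.exp (-(L ^ 2 / 16)) with hX
  have hX0 : 0 < X := Real.exp_pos _
  have hX8 : Real.exp (-(L ^ 2 / 8)) ≤ X := Real.exp_le_exp.2 (by nlinarith [sq_nonneg L])
  have hX4 : Real.exp (-(L ^ 2 / 4)) ≤ X := Real.exp_le_exp.2 (by nlinarith [sq_nonneg L])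
  have h1 : Pp p (completeEdges n) (fun G => ∃ i ∈ (univ : Finset (Bool × Fin n)),
      Real.sqrt n * L < |adeg p (side S i.1) i.2 G|) ≤ 4 * n * X := by
    refine (Pp_exists_le hp0 hp1 _ _ _).trans ((sum_le_sum (g := fun _ => 2 * X) fun i _ =>
      (deg_tail hp0 hp1 hn hL _ _).trans (by linarith)).trans (le_of_eq ?_))
    simp
    ring
  have h2 : Pp p (completeEdges n) (fun G => ∃ i ∈ (univ : Finset (Bool × Bool)),
      n * L < |∑ x ∈ side S i.1, adeg p (side S i.2) x G|) ≤ 8 * X := by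
    refine (Pp_exists_le hp0 hp1 _ _ _).trans ((sum_le_sum (g := fun _ => 2 * X) fun i _ =>
      (lin_tail hp0 hp1 hn hL _ _).trans (by linarith)).trans (le_of_eq ?_))
    simp
    ring
  have h3 : Pp p (completeEdges n) (fun G => ∃ i ∈ (univ : Finset (Bool × Bool × Bool)),
      2 * (n * Real.sqrt n * L ^ 2) <
        |cherryForm p (side S i.1) (side S i.2.1) (side S i.2.2) G|) ≤
      8 * (2 * (2 * X + (n:ℝ) ^ 2 * (2 * X))) := by
    refine (Pp_exists_le hp0 hp1 _ _ _).trans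
      ((sum_le_sum (g := fun _ => 2 * (2 * X + (n:ℝ) ^ 2 * (2 * X))) fun i _ =>
      (cherryForm_tail hp0 hp1 hn hL _ _ _).trans (by linarith)).trans (le_of_eq ?_))
    simp
  refine (Pp_mono hp0 hp1 (fun G _ h => ?_)).trans ((Pp_or_le hp0 hp1 _ _ _).trans
    (add_le_add h1 ((Pp_or_le hp0 hp1 _ _ _).trans (add_le_add h2 h3)))) |>.trans ?_
  · by_contra hcon
    push Not at hcon
    exact h ⟨fun i => hcon.1 i (mem_univ _), fun i => hcon.2.1 i (mem_univ _),
      fun i => hcon.2.2 i (mem_univ _)⟩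
  · nlinarith [mul_nonneg (sub_nonneg.2 hn') hX0.le,
      mul_nonneg (mul_nonneg (sub_nonneg.2 hn') (sub_nonneg.2 hn')) hX0.le]

/-! ### Conditional second moments of a swap -/

/-- The typical value of `k⁻¹ (n - k)⁻¹ ∑ x ∈ S, ∑ y ∈ Sᶜ, swapInc c x y * swapInc d x y` over
`k`-sets `S`. -/
def momCenter (p : ℝ) (n k : ℕ) (c d : Bool) : ℝ :=
  if c = d then p * (1 - p) * (2 * (if c then (k:ℝ) else (n:ℝ) - k) - 1) else 0

lemma sum_prod_diff (A B : Finset (Fin n)) (U V : Fin n → ℝ) :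
    ∑ x ∈ A, ∑ y ∈ B, (U y - U x) * (V y - V x) =
      #A * ∑ y ∈ B, U y * V y + #B * ∑ x ∈ A, U x * V x -
        (∑ x ∈ A, U x) * ∑ y ∈ B, V y - (∑ y ∈ B, U y) * ∑ x ∈ A, V x := by
  have h : ∀ x ∈ A, ∑ y ∈ B, (U y - U x) * (V y - V x) =
      ∑ y ∈ B, U y * V y + #B * (U x * V x) - U x * ∑ y ∈ B, V y -
        (∑ y ∈ B, U y) * V x := by
    intro x _
    rw [mul_sum, sum_mul, ← nsmul_eq_mul, ← sum_const, ← sum_add_distrib, ← sum_sub_distrib,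
      ← sum_sub_distrib]
    exact sum_congr rfl fun y _ => by ring
  rw [sum_congr rfl h, sum_sub_distrib, sum_sub_distrib, sum_add_distrib, sum_const,
    nsmul_eq_mul, ← mul_sum, ← sum_mul, ← mul_sum]

/-- Contribution of one side `b` to `momCenter`. -/
lemma sdeg_sum_close (hp0 : 0 ≤ p) (hp1 : p ≤ 1) {k : ℕ} {S : Finset (Fin n)} (hS : #S = k)
    {L : ℝ} (hL : 1 ≤ L) {G : Finset (Sym2 (Fin n))} (hG : Good p L S G) (b c d : Bool) :
    |∑ x ∈ side S b, sdeg p S G c x * sdeg p S G d x -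
      #(side S b) * (if c = d then p * (1 - p) *
        ((if c then (k:ℝ) else (n:ℝ) - k) - if b = c then 1 else 0) else 0)| ≤
      3 * (n * Real.sqrt n * L ^ 2) := by
  have hkn : k ≤ n := by
    have := card_le_univ S
    rw [Fintype.card_fin] at this
    omega
  have hcard : ∀ c, (#(side S c) : ℝ) = if c then (k:ℝ) else (n:ℝ) - k := by
    intro c
    cases c
    · simp [side, card_compl, hS, Nat.cast_sub hkn]
    · simp [side, hS]
  have hlin : ((n:ℝ) * L) ≤ n * Real.sqrt n * L ^ 2 := by
    rcases Nat.eq_zero_or_pos n with h | h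
    · simp [h]
    have h1 : (1:ℝ) ≤ n := by exact_mod_cast h
    have h2 : 1 ≤ Real.sqrt n := Real.one_le_sqrt.2 h1
    have h3 : L ≤ L ^ 2 := by nlinarith
    calc (n:ℝ) * L = n * 1 * L := by ring
      _ ≤ _ := by gcongr
  have hmain := abs_sum_adeg_mul_sub_le hp0 hp1 (side S b) (side S c) (side S d) G
  have hQ := hG.2.2 (b, c, d)
  simp only at hQ
  by_cases hcd : c = d
  · subst hcd
    have hl := hG.2.1 (b, c)
    simp only at hl
    rw [inter_self] at hmain
    have e1 : ∑ x ∈ side S b, sdeg p S G c x * sdeg p S G c x =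
        ∑ x ∈ side S b, adeg p (side S c) x G * adeg p (side S c) x G := by
      refine sum_congr rfl fun x _ => ?_
      unfold sdeg
      cases c <;> simp
    have e2 : ∑ x ∈ side S b, (#((side S c).erase x) : ℝ) =
        #(side S b) * ((if c then (k:ℝ) else (n:ℝ) - k) - if b = c then 1 else 0) := by
      rw [← nsmul_eq_mul, ← sum_const]
      refine sum_congr rfl fun x hx => ?_
      rw [← hcard c]
      by_cases hbc : b = c
      · subst hbc
        rw [if_pos rfl, card_erase_of_mem hx, Nat.cast_sub (card_pos.2 ⟨x, hx⟩)]
        simp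
      · rw [if_neg hbc, erase_eq_of_notMem, sub_zero]
        revert hx hbc
        cases b <;> cases c <;> simp [side]
    rw [e1, if_pos rfl]
    rw [e2] at hmain
    have e3 : (#(side S b) : ℝ) * (p * (1 - p) *
        ((if c then (k:ℝ) else (n:ℝ) - k) - if b = c then 1 else 0)) = p * (1 - p) *
        (#(side S b) * ((if c then (k:ℝ) else (n:ℝ) - k) - if b = c then 1 else 0)) := by ring
    rw [e3]
    linarith
  · have hinter : side S c ∩ side S d = ∅ := by
      revert hcd
      cases c <;> cases d <;> simp [side, inter_comm Sᶜ S]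
    rw [hinter] at hmain
    simp only [erase_empty, card_empty, Nat.cast_zero, sum_const_zero, mul_zero, sub_zero, adeg,
      sum_empty, abs_zero, add_zero] at hmain
    have e1 : ∑ x ∈ side S b, sdeg p S G c x * sdeg p S G d x =
        -∑ x ∈ side S b, adeg p (side S c) x G * adeg p (side S d) x G := by
      rw [← sum_neg_distrib]
      refine sum_congr rfl fun x _ => ?_
      unfold sdeg
      revert hcd
      cases c <;> cases d <;> simp
    rw [e1, if_neg hcd, mul_zero, sub_zero, abs_neg]
    have : 0 ≤ (n * Real.sqrt n * L ^ 2) := by positivity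
    exact hmain.trans (hQ.trans (by linarith))

lemma sum_sdeg_le {S : Finset (Fin n)} {L : ℝ} {G : Finset (Sym2 (Fin n))} (hG : Good p L S G)
    (b c : Bool) : |∑ x ∈ side S b, sdeg p S G c x| ≤ n * L := by
  unfold sdeg
  rw [← mul_sum, abs_mul]
  have := hG.2.1 (b, c)
  cases c <;> simpa using this

lemma good_close (hp0 : 0 ≤ p) (hp1 : p ≤ 1) {k : ℕ} {S : Finset (Fin n)} (hS : #S = k)
    {δ : ℝ} (hδ : 0 < δ) (hδ1 : δ ≤ 1) (hn : 0 < n) (hk : δ * n ≤ k) (hk' : δ * n ≤ n - k)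
    {L : ℝ} (hL : 1 ≤ L) {G : Finset (Sym2 (Fin n))} (hG : Good p L S G) (c d : Bool) :
    |(∑ x ∈ S, ∑ y ∈ Sᶜ, swapInc p S G c x y * swapInc p S G d x y) / (k * ((n:ℝ) - k)) -
      momCenter p n k c d| ≤ 13 * (Real.sqrt n * L ^ 2) / δ ^ 2 := by
  have hn' : (1:ℝ) ≤ n := by exact_mod_cast hn
  have hsq : 1 ≤ Real.sqrt n := Real.one_le_sqrt.2 hn'
  set κ : ℝ := (k:ℝ) with hκ
  set κ' : ℝ := (n:ℝ) - k with hκ'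
  have hδn : 0 < δ * n := by positivity
  have hκ0 : 0 < κ := by linarith
  have hκ0' : 0 < κ' := by linarith
  have hkn : k ≤ n := by
    rw [← hS]
    simpa using card_le_univ S
  have hc1 : (#S : ℝ) = κ := by rw [hS]
  have hc2 : (#Sᶜ : ℝ) = κ' := by
    rw [card_compl, hS, Fintype.card_fin, Nat.cast_sub hkn]
  set U := sdeg p S G c
  set V := sdeg p S G d
  set Z := Real.sqrt n * L ^ 2 with hZ
  have hZ1 : 1 ≤ Z := one_le_mul_of_one_le_of_one_le hsq (one_le_pow₀ hL)
  -- the diagonal sums on the two sides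
  have hA := sdeg_sum_close hp0 hp1 hS hL hG true c d
  have hB := sdeg_sum_close hp0 hp1 hS hL hG false c d
  have hU1 := sum_sdeg_le hG true c
  have hU2 := sum_sdeg_le hG false c
  have hV1 := sum_sdeg_le hG true d
  have hV2 := sum_sdeg_le hG false d
  simp only [side, if_true, Bool.false_eq_true, if_false, hc1, hc2] at hA hB hU1 hU2 hV1 hV2
  set mA : ℝ := if c = d then p * (1 - p) *
        ((if c then κ else κ') - if true = c then 1 else 0) else 0 with hmA
  set mB : ℝ := if c = d then p * (1 - p) *
        ((if c then κ else κ') - if false = c then 1 else 0) else 0 with hmB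
  have hm : momCenter p n k c d = mA + mB := by
    unfold momCenter
    rw [hmA, hmB]
    cases c <;> cases d <;> simp [← hκ] <;> ring
  set R := ∑ x ∈ S, ∑ y ∈ Sᶜ, (xi p s(x, y) G ^ 2 -
    xi p s(x, y) G * ((U y - U x) + (V y - V x))) with hR
  have hexp : ∑ x ∈ S, ∑ y ∈ Sᶜ, swapInc p S G c x y * swapInc p S G d x y =
      (κ * ∑ y ∈ Sᶜ, U y * V y + κ' * ∑ x ∈ S, U x * V x -
        (∑ x ∈ S, U x) * ∑ y ∈ Sᶜ, V y - (∑ y ∈ Sᶜ, U y) * ∑ x ∈ S, V x) + R := by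
    rw [← hc1, ← hc2, ← sum_prod_diff, hR, ← sum_add_distrib]
    refine sum_congr rfl fun x _ => ?_
    rw [← sum_add_distrib]
    refine sum_congr rfl fun y _ => ?_
    unfold swapInc
    ring
  have hRle : |R| ≤ κ * (κ' * (5 * Z)) := by
    rw [hR, ← hc1, ← hc2]
    refine (abs_sum_le_sum_abs _ _).trans ?_
    rw [← nsmul_eq_mul, ← sum_const]
    refine sum_le_sum fun x _ => (abs_sum_le_sum_abs _ _).trans ?_
    rw [← nsmul_eq_mul, ← sum_const]
    refine sum_le_sum fun y _ => ?_
    have hx := abs_xi_le hp0 hp1 s(x, y) G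
    have hbd : ∀ (b : Bool) (v : Fin n), |sdeg p S G b v| ≤ Real.sqrt n * L := fun b v => by
      rw [abs_sdeg]; exact hG.1 (b, v)
    have h1 : |(U y - U x) + (V y - V x)| ≤ 4 * (Real.sqrt n * L) := by
      have a1 := abs_le.1 (hbd c y)
      have a2 := abs_le.1 (hbd c x)
      have a3 := abs_le.1 (hbd d y)
      have a4 := abs_le.1 (hbd d x)
      rw [abs_le]
      constructor <;> linarith [a1.1, a1.2, a2.1, a2.2, a3.1, a3.2, a4.1, a4.2]
    have h2 : Real.sqrt n * L ≤ Z := by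
      rw [hZ]; gcongr; exact le_self_pow₀ hL two_ne_zero
    calc _ ≤ |xi p s(x, y) G ^ 2| + |xi p s(x, y) G * ((U y - U x) + (V y - V x))| := abs_sub _ _
      _ ≤ 1 + 1 * (4 * (Real.sqrt n * L)) := by
          rw [abs_pow, abs_mul]
          gcongr
          exact pow_le_one₀ (abs_nonneg _) hx
      _ ≤ _ := by linarith
  set SA := ∑ x ∈ S, U x * V x
  set SB := ∑ y ∈ Sᶜ, U y * V y
  set U1 := ∑ x ∈ S, U x
  set U2 := ∑ y ∈ Sᶜ, U y
  set V1 := ∑ x ∈ S, V x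
  set V2 := ∑ y ∈ Sᶜ, V y
  have hq : n * Real.sqrt n * L ^ 2 = n * Z := by rw [hZ]; ring
  rw [hq] at hA hB
  have hprod : ∀ a b : ℝ, |a| ≤ n * L → |b| ≤ n * L → |a * b| ≤ n ^ 2 * Z := by
    intro a b ha hb
    rw [abs_mul]
    calc |a| * |b| ≤ (n * L) * (n * L) := by gcongr
      _ = n ^ 2 * (1 * L ^ 2) := by ring
      _ ≤ _ := by rw [hZ]; gcongr
  rw [hexp, hm]
  have hkk : 0 < κ * κ' := mul_pos hκ0 hκ0'
  have hsplit : (κ * SB + κ' * SA - U1 * V2 - U2 * V1 + R) / (κ * κ') - (mA + mB) =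
      (κ * (SB - κ' * mB) + κ' * (SA - κ * mA) - U1 * V2 - U2 * V1 + R) / (κ * κ') := by
    field_simp
    ring
  rw [hsplit, abs_div, abs_of_pos hkk, div_le_iff₀ hkk]
  have hnum : |κ * (SB - κ' * mB) + κ' * (SA - κ * mA) - U1 * V2 - U2 * V1 + R| ≤
      κ * (3 * (n * Z)) + κ' * (3 * (n * Z)) + n ^ 2 * Z + n ^ 2 * Z + κ * (κ' * (5 * Z)) := by
    refine (abs_add_le _ _).trans (add_le_add ?_ hRle)
    refine (abs_sub _ _).trans (add_le_add ?_ (hprod _ _ hU2 hV1))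
    refine (abs_sub _ _).trans (add_le_add ?_ (hprod _ _ hU1 hV2))
    refine (abs_add_le _ _).trans (add_le_add ?_ ?_)
    · rw [abs_mul, abs_of_pos hκ0]; gcongr
    · rw [abs_mul, abs_of_pos hκ0']; gcongr
  refine hnum.trans ?_
  -- everything is compared with `κ * κ' * Z / δ ^ 2`
  have hnk : (n:ℝ) ≤ κ / δ := by rw [le_div_iff₀ hδ]; linarith
  have hnk' : (n:ℝ) ≤ κ' / δ := by rw [le_div_iff₀ hδ]; linarith
  have hinv : 1 ≤ 1 / δ := by rw [le_div_iff₀ hδ]; linarith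
  set D := 1 / δ with hD
  have t1 : (n:ℝ) ≤ κ * D := by rw [hD, mul_one_div]; exact hnk
  have t2 : (n:ℝ) ≤ κ' * D := by rw [hD, mul_one_div]; exact hnk'
  have t3 : (13 * Z / δ ^ 2) = 13 * Z * D ^ 2 := by rw [hD]; field_simp
  rw [t3]
  have hD2 : D ≤ D ^ 2 := le_self_pow₀ hinv two_ne_zero
  have hD1 : 1 ≤ D ^ 2 := one_le_pow₀ hinv
  have s1 : κ * (n * Z) ≤ κ * κ' * Z * D ^ 2 := by
    calc κ * (n * Z) ≤ κ * ((κ' * D) * Z) := by gcongr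
      _ = κ * κ' * Z * D := by ring
      _ ≤ _ := by gcongr
  have s2 : κ' * (n * Z) ≤ κ * κ' * Z * D ^ 2 := by
    calc κ' * (n * Z) ≤ κ' * ((κ * D) * Z) := by gcongr
      _ = κ * κ' * Z * D := by ring
      _ ≤ _ := by gcongr
  have s3 : n ^ 2 * Z ≤ κ * κ' * Z * D ^ 2 := by
    calc (n:ℝ) ^ 2 * Z = (n * n) * Z := by ring
      _ ≤ ((κ * D) * (κ' * D)) * Z := by gcongr
      _ = _ := by ring
  have s4 : κ * (κ' * Z) ≤ κ * κ' * Z * D ^ 2 := by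
    calc κ * (κ' * Z) = κ * κ' * Z * 1 := by ring
      _ ≤ _ := by gcongr
  linarith

lemma bad_close (hp0 : 0 ≤ p) (hp1 : p ≤ 1) {k : ℕ} {S : Finset (Fin n)} (hS : #S = k)
    (hk : 0 < k) (hk' : k < n) (G : Finset (Sym2 (Fin n))) (c d : Bool) :
    |(∑ x ∈ S, ∑ y ∈ Sᶜ, swapInc p S G c x y * swapInc p S G d x y) / (k * ((n:ℝ) - k)) -
      momCenter p n k c d| ≤ 11 * (n:ℝ) ^ 2 := by
  have hk0 : (0:ℝ) < k := by exact_mod_cast hk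
  have hk0' : (0:ℝ) < (n:ℝ) - k := by
    have : (k:ℝ) < n := by exact_mod_cast hk'
    linarith
  have hn1 : (1:ℝ) ≤ n := by exact_mod_cast (by omega : 1 ≤ n)
  have hc2 : (#Sᶜ : ℝ) = (n:ℝ) - k := by
    rw [card_compl, hS, Fintype.card_fin, Nat.cast_sub hk'.le]
  have hkk := mul_pos hk0 hk0'
  have h1 : |(∑ x ∈ S, ∑ y ∈ Sᶜ, swapInc p S G c x y * swapInc p S G d x y) /
      (k * ((n:ℝ) - k))| ≤ 9 * (n:ℝ) ^ 2 := by
    rw [abs_div, abs_of_pos hkk, div_le_iff₀ hkk]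
    calc _ ≤ ∑ x ∈ S, ∑ y ∈ Sᶜ, (9 * (n:ℝ) ^ 2) := by
          refine (abs_sum_le_sum_abs _ _).trans (sum_le_sum fun x _ =>
            (abs_sum_le_sum_abs _ _).trans (sum_le_sum fun y _ => ?_))
          rw [abs_mul]
          calc _ ≤ (3 * (n:ℝ)) * (3 * n) := by
                gcongr <;> exact abs_swapInc_le hp0 hp1 S G _ x y
            _ = _ := by ring
      _ = _ := by
          rw [sum_const, sum_const, nsmul_eq_mul, nsmul_eq_mul, hc2, hS]; ring
  have h2 : |momCenter p n k c d| ≤ 2 * (n:ℝ) ^ 2 := by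
    unfold momCenter
    split_ifs with h
    · have hpp : 0 ≤ p * (1 - p) := mul_nonneg hp0 (by linarith)
      have hpp1 : p * (1 - p) ≤ 1 := by nlinarith
      have hk1 : (1:ℝ) ≤ k := by exact_mod_cast hk
      rw [abs_mul, abs_of_nonneg hpp]
      calc _ ≤ 1 * |2 * (k:ℝ) - 1| := by gcongr
        _ ≤ 2 * n := by rw [one_mul, abs_le]; constructor <;> linarith
        _ ≤ _ := by nlinarith
    · have hpp : 0 ≤ p * (1 - p) := mul_nonneg hp0 (by linarith)
      have hpp1 : p * (1 - p) ≤ 1 := by nlinarith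
      have hk1 : (1:ℝ) ≤ (n:ℝ) - k := by
        have : ((k + 1 : ℕ) : ℝ) ≤ n := by exact_mod_cast hk'
        push_cast at this
        linarith
      rw [abs_mul, abs_of_nonneg hpp]
      calc _ ≤ 1 * |2 * ((n:ℝ) - k) - 1| := by gcongr
        _ ≤ 2 * n := by rw [one_mul, abs_le]; constructor <;> linarith
        _ ≤ _ := by nlinarith
    · simp
  refine (abs_sub _ _).trans ?_
  linarith

end Swap

/-! ### Variance of a conditional expectation -/

lemma Varu_le {α : Type*} (Ω : Finset α) (f : α → ℝ) (c : ℝ) :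
    Varu Ω f ≤ (∑ a ∈ Ω, (f a - c) ^ 2) / #Ω := by
  rcases Ω.eq_empty_or_nonempty with h | h
  · simp [Varu, Exu, h]
  have hc : (0:ℝ) < #Ω := by exact_mod_cast h.card_pos
  unfold Varu
  rw [Exu]
  refine div_le_div_of_nonneg_right ?_ hc.le
  set m := Exu Ω f with hm
  have hsum : ∑ a ∈ Ω, (f a - m) = 0 := by
    rw [sum_sub_distrib, sum_const, nsmul_eq_mul, hm, Exu]
    field_simp
    ring
  have h2 : ∑ a ∈ Ω, (f a - c) ^ 2 =
      ∑ a ∈ Ω, (f a - m) ^ 2 + 2 * (m - c) * ∑ a ∈ Ω, (f a - m) + #Ω * (m - c) ^ 2 := by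
    rw [mul_sum, ← nsmul_eq_mul, ← sum_const, ← sum_add_distrib, ← sum_add_distrib]
    exact sum_congr rfl fun a _ => by ring
  rw [h2, hsum]
  have : 0 ≤ (#Ω : ℝ) * (m - c) ^ 2 := by positivity
  linarith

/-- If `g` depends only on the first component of a uniform point of `A.sigma B` (with fibres of
constant size), then conditioning on `g` is coarser than conditioning on the first component, so by
Jensen's inequality the variance of the conditional expectation is at most the mean square
deviation from any constant of the conditional expectation given the first component. -/
lemma Varu_condExpU_le {ι κ β : Type*} (A : Finset ι) (B : ι → Finset κ) (b : ℕ) (hb : 0 < b)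
    (hB : ∀ S ∈ A, #(B S) = b) (f : (Σ _ : ι, κ) → ℝ) (g : ι → β) (c : ℝ) :
    Varu (A.sigma B) (condExpU (A.sigma B) f (fun ω => g ω.1)) ≤
      (∑ S ∈ A, ((∑ z ∈ B S, f ⟨S, z⟩) / b - c) ^ 2) / #A := by
  classical
  have hb' : (0:ℝ) < b := by exact_mod_cast hb
  set F : ι → ℝ := fun S => (∑ z ∈ B S, f ⟨S, z⟩) / b with hF
  set Φ : ι → ℝ := fun S => (∑ S' ∈ A with g S' = g S, F S') / #{S' ∈ A | g S' = g S} with hΦ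
  have hcardA : ∀ A' ⊆ A, (#(A'.sigma B) : ℝ) = #A' * b := by
    intro A' hA'
    rw [card_sigma, sum_congr rfl fun S hS => hB S (hA' hS), sum_const, smul_eq_mul]
    push_cast
    rfl
  have hcond : ∀ ω ∈ A.sigma B, condExpU (A.sigma B) f (fun ω => g ω.1) ω = Φ ω.1 := by
    intro ω _
    unfold condExpU
    have h1 : (A.sigma B).filter (fun ω' => g ω'.1 = g ω.1) =
        (A.filter fun S' => g S' = g ω.1).sigma B := by
      ext ⟨S, z⟩
      simp only [mem_filter, mem_sigma]
      tauto
    rw [Exu, h1, sum_sigma, hcardA _ (filter_subset _ _)]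
    simp only [hΦ, hF]
    rw [← sum_div, div_div, mul_comm (b:ℝ)]
  refine (Varu_le _ _ c).trans ?_
  have h2 : ∑ ω ∈ A.sigma B, (condExpU (A.sigma B) f (fun ω => g ω.1) ω - c) ^ 2 =
      (∑ S ∈ A, (Φ S - c) ^ 2) * b := by
    rw [sum_congr rfl fun ω hω => by rw [hcond ω hω], sum_sigma, sum_mul]
    refine sum_congr rfl fun S hS => ?_
    simp [hB S hS, mul_comm]
  rw [h2, hcardA A subset_rfl, mul_div_mul_right _ _ hb'.ne']
  refine div_le_div_of_nonneg_right ?_ (Nat.cast_nonneg _)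
  have h3 : ∀ S ∈ A, (Φ S - c) ^ 2 ≤
      ∑ S' ∈ A, if g S' = g S then (F S' - c) ^ 2 / #{S'' ∈ A | g S'' = g S} else 0 := by
    intro S hS
    have hpos : (0:ℝ) < #{S' ∈ A | g S' = g S} := by
      have hmem : S ∈ A.filter fun S' => g S' = g S := mem_filter.2 ⟨hS, rfl⟩
      exact_mod_cast card_pos.2 ⟨S, hmem⟩
    have e1 : Φ S - c = (∑ S' ∈ A with g S' = g S, (F S' - c)) / #{S' ∈ A | g S' = g S} := by
      rw [sum_sub_distrib, sum_const, nsmul_eq_mul, sub_div, mul_div_cancel_left₀ _ hpos.ne']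
    rw [← sum_filter, ← sum_div, e1, div_pow, div_le_div_iff₀ (by positivity) hpos]
    have := sq_sum_le_card_mul_sum_sq (s := A.filter fun S' => g S' = g S)
      (f := fun S' => F S' - c)
    nlinarith
  refine (sum_le_sum h3).trans (le_of_eq ?_)
  rw [sum_comm]
  refine sum_congr rfl fun S' hS' => ?_
  have hpos : (0:ℝ) < #{S ∈ A | g S = g S'} := by
    have hmem : S' ∈ A.filter fun S => g S = g S' := mem_filter.2 ⟨hS', rfl⟩
    exact_mod_cast card_pos.2 ⟨S', hmem⟩
  have e2 : ∀ S ∈ A, (if g S' = g S then (F S' - c) ^ 2 / #{S'' ∈ A | g S'' = g S} else 0 : ℝ) =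
      if g S = g S' then (F S' - c) ^ 2 / #{S'' ∈ A | g S'' = g S'} else 0 := by
    intro S _
    by_cases h : g S = g S'
    · simp only [h]
    · rw [if_neg h, if_neg fun h' => h h'.symm]
  rw [sum_congr rfl e2, ← sum_filter, sum_const, nsmul_eq_mul, mul_div_cancel₀ _ hpos.ne']

/-! ### Assembly -/

/-- The quantity of the theorem is small as soon as few `k`-sets are bad for `G`. -/
lemma var_bound {n k M : ℕ} {p δ L s : ℝ} (hp0 : 0 ≤ p) (hp1 : p ≤ 1) (hδ : 0 < δ) (hδ1 : δ ≤ 1)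
    (hk0 : 0 < k) (hkn : k < n) (hk : δ * n ≤ k) (hk' : δ * n ≤ n - k) (hL : 1 ≤ L)
    {G : Finset (Sym2 (Fin n))} (hG : G ⊆ completeEdges n)
    (hbad : (∑ S ∈ kSets n k, (open Classical in if Good p L S G then (0:ℝ) else 1)) ≤
      s * #(kSets n k)) (i : ℕ) (hi : i ≤ 2) :
    Varu (SwapΩ n k)
      (condExpU (SwapΩ n k)
        (fun ω =>
          (Wfun n M k G (insert ω.2.2 (ω.1.erase ω.2.1)) - Wfun n M k G ω.1) ^ i *
          (Wfun n M (n - k) G (insert ω.2.1 (ω.1ᶜ.erase ω.2.2)) -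
            Wfun n M (n - k) G ω.1ᶜ) ^ (2 - i))
        (fun ω => (Wfun n M k G ω.1, Wfun n M (n - k) G ω.1ᶜ)))
      ≤ 169 / δ ^ 4 * (L ^ 4 / n ^ 3) + 121 * s := by
  classical
  have hn0 : 0 < n := by omega
  have hn' : (0:ℝ) < n := by exact_mod_cast hn0
  have hcard : ∀ S ∈ kSets n k, #S = k := fun S hS => (mem_powersetCard.1 hS).2
  obtain ⟨c, d, hcd⟩ : ∃ c d : Bool, ∀ u v : ℝ, u ^ i * v ^ (2 - i) =
      (if c then u else v) * (if d then u else v) := by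
    interval_cases i
    · exact ⟨false, false, fun u v => by simp; ring⟩
    · exact ⟨true, false, fun u v => by simp⟩
    · exact ⟨true, true, fun u v => by simp; ring⟩
  refine (Varu_condExpU_le (kSets n k) (fun S => S ×ˢ Sᶜ) (k * (n - k))
    (Nat.mul_pos hk0 (by omega)) (fun S hS => by simp [card_compl, hcard S hS]) _
    (fun S => (Wfun n M k G S, Wfun n M (n - k) G Sᶜ)) (momCenter p n k c d / n ^ 2)).trans ?_
  have hKpos : (0:ℝ) < #(kSets n k) := by
    rw [kSets, card_powersetCard, card_univ, Fintype.card_fin]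
    exact_mod_cast Nat.choose_pos hkn.le
  rw [div_le_iff₀ hKpos]
  have hterm : ∀ S ∈ kSets n k,
      ((∑ z ∈ S ×ˢ Sᶜ, (Wfun n M k G (insert z.2 (S.erase z.1)) - Wfun n M k G S) ^ i *
          (Wfun n M (n - k) G (insert z.1 (Sᶜ.erase z.2)) -
            Wfun n M (n - k) G Sᶜ) ^ (2 - i)) / (k * (n - k) : ℕ) -
        momCenter p n k c d / n ^ 2) ^ 2 ≤
      169 / δ ^ 4 * (L ^ 4 / n ^ 3) + 121 * (if Good p L S G then (0:ℝ) else 1) := by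
    intro S hS
    have hSk := hcard S hS
    set Y := (∑ x ∈ S, ∑ y ∈ Sᶜ, swapInc p S G c x y * swapInc p S G d x y) /
      (k * ((n:ℝ) - k)) - momCenter p n k c d with hY
    have e1 : (∑ z ∈ S ×ˢ Sᶜ, (Wfun n M k G (insert z.2 (S.erase z.1)) - Wfun n M k G S) ^ i *
          (Wfun n M (n - k) G (insert z.1 (Sᶜ.erase z.2)) -
            Wfun n M (n - k) G Sᶜ) ^ (2 - i)) / (k * (n - k) : ℕ) -
        momCenter p n k c d / n ^ 2 = Y / n ^ 2 := by
      rw [sum_product]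
      have e2 : ∀ x ∈ S, ∑ y ∈ Sᶜ, (Wfun n M k G (insert y (S.erase x)) - Wfun n M k G S) ^ i *
          (Wfun n M (n - k) G (insert x (Sᶜ.erase y)) - Wfun n M (n - k) G Sᶜ) ^ (2 - i) =
          (∑ y ∈ Sᶜ, swapInc p S G c x y * swapInc p S G d x y) / n ^ 2 := by
        intro x hx
        rw [sum_div]
        refine sum_congr rfl fun y hy => ?_
        have hy' : y ∉ S := mem_compl.1 hy
        rw [hcd, swapInc_true (p := p) hG hx hy', swapInc_false (p := p) hG hx hy']
        cases c <;> cases d <;> simp <;> ring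
      rw [sum_congr rfl e2, ← sum_div, hY, Nat.cast_mul, Nat.cast_sub hkn.le]
      ring
    rw [e1]
    split_ifs with hgood
    · have h := good_close hp0 hp1 hSk hδ hδ1 hn0 hk hk' hL hgood c d
      rw [← hY] at h
      have hs := Real.sq_sqrt hn'.le
      calc (Y / (n:ℝ) ^ 2) ^ 2 = |Y| ^ 2 / (n:ℝ) ^ 4 := by rw [div_pow, sq_abs]; ring
        _ ≤ (13 * (Real.sqrt n * L ^ 2) / δ ^ 2) ^ 2 / (n:ℝ) ^ 4 := by gcongr
        _ = 169 * ((Real.sqrt n) ^ 2 * L ^ 4) / δ ^ 4 / (n:ℝ) ^ 4 := by ring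
        _ = _ := by rw [hs]; field_simp; ring
    · have h := bad_close hp0 hp1 hSk hk0 hkn G c d
      rw [← hY] at h
      have h0 : 0 ≤ 169 / δ ^ 4 * (L ^ 4 / (n:ℝ) ^ 3) := by positivity
      calc (Y / (n:ℝ) ^ 2) ^ 2 = |Y| ^ 2 / (n:ℝ) ^ 4 := by rw [div_pow, sq_abs]; ring
        _ ≤ (11 * (n:ℝ) ^ 2) ^ 2 / (n:ℝ) ^ 4 := by gcongr
        _ = 121 := by field_simp; norm_num
        _ ≤ _ := by linarith
  refine (sum_le_sum hterm).trans ?_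
  rw [sum_add_distrib, sum_const, nsmul_eq_mul, ← mul_sum]
  nlinarith

lemma graphsM_eq (n M : ℕ) : graphsM n M = (completeEdges n).powersetCard M := by
  classical
  ext G
  simp [graphsM, mem_powersetCard]

/-- Double counting of pairs (bad `k`-set, graph), followed by Markov's inequality. -/
lemma few_bad_prob {n k M : ℕ} (hn : 2 ≤ n) (hkn : k ≤ n) (hM : (M:ℝ) ≤ Nr n) {L s : ℝ}
    (hL : 0 < L) (hs : 0 < s) :
    1 - 80 * (n:ℝ) ^ 4 * Real.exp (-(L ^ 2 / 16)) / s ≤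
    PrGnM n M (fun G => (∑ S ∈ kSets n k,
      (open Classical in if Good ((M:ℝ) / Nr n) L S G then (0:ℝ) else 1)) ≤
      s * #(kSets n k)) := by
  classical
  have hn' : (2:ℝ) ≤ n := by exact_mod_cast hn
  have hN := card_completeEdges n
  have hNpos : 0 < Nr n := by unfold Nr; nlinarith
  have hNle : Nr n + 1 ≤ (n:ℝ) ^ 2 := by unfold Nr; nlinarith
  have hEpos : 0 < #(completeEdges n) := by
    have : (0:ℝ) < #(completeEdges n) := by rw [hN]; exact hNpos
    exact_mod_cast this
  have hME : M ≤ #(completeEdges n) := by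
    have : (M:ℝ) ≤ #(completeEdges n) := by rw [hN]; exact hM
    exact_mod_cast this
  set p := (M:ℝ) / Nr n with hp
  have hp0 : 0 ≤ p := by positivity
  have hp1 : p ≤ 1 := by rw [hp, div_le_one hNpos]; exact hM
  set Γ := (completeEdges n).powersetCard M with hΓ
  set X := 80 * (n:ℝ) ^ 2 * Real.exp (-(L ^ 2 / 16)) with hX
  have hX0 : 0 ≤ X := by positivity
  have hΓpos : (0:ℝ) < #Γ := by
    rw [hΓ, card_powersetCard]; exact_mod_cast Nat.choose_pos hME
  have hKpos : (0:ℝ) < #(kSets n k) := by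
    rw [kSets, card_powersetCard, card_univ, Fintype.card_fin]
    exact_mod_cast Nat.choose_pos hkn
  set Z : Finset (Sym2 (Fin n)) → ℝ := fun G =>
    ∑ S ∈ kSets n k, if Good p L S G then (0:ℝ) else 1 with hZ
  have h1 : ∀ S : Finset (Fin n), ∑ G ∈ Γ, (if Good p L S G then (0:ℝ) else 1) ≤
      #Γ * ((n:ℝ) ^ 2 * X) := by
    intro S
    have ht := transfer (completeEdges n) hEpos hME (fun G => ¬ Good p L S G)
    rw [hN, ← hp, ← hΓ] at ht
    have e : ∑ G ∈ Γ, (if Good p L S G then (0:ℝ) else 1) = #{G ∈ Γ | ¬ Good p L S G} := by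
      rw [card_filter]
      push_cast
      refine sum_congr rfl fun G _ => ?_
      by_cases h : Good p L S G <;> simp [h]
    rw [e]
    refine le_trans (le_of_eq (by congr!)) (ht.trans ?_)
    have hb := bad_prob hp0 hp1 (by omega) hL S
    refine mul_le_mul_of_nonneg_left ?_ hΓpos.le
    exact (mul_le_mul_of_nonneg_left hb (by linarith)).trans (mul_le_mul_of_nonneg_right hNle hX0)
  have h2 : ∑ G ∈ Γ, Z G ≤ #(kSets n k) * (#Γ * ((n:ℝ) ^ 2 * X)) := by
    simp only [hZ]
    rw [sum_comm, ← nsmul_eq_mul, ← sum_const]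
    exact sum_le_sum fun S _ => h1 S
  have h3 : (#{G ∈ Γ | ¬ Z G ≤ s * #(kSets n k)} : ℝ) * (s * #(kSets n k)) ≤ ∑ G ∈ Γ, Z G := by
    rw [← nsmul_eq_mul, ← sum_const]
    refine (sum_le_sum (g := Z) fun G hG => ?_).trans
      (sum_le_sum_of_subset_of_nonneg (filter_subset _ _) fun G _ _ => ?_)
    · exact (not_le.1 (mem_filter.1 hG).2).le
    · exact sum_nonneg fun S _ => by split_ifs <;> norm_num
  have h4 : (#{G ∈ Γ | ¬ Z G ≤ s * #(kSets n k)} : ℝ) * s ≤ #Γ * ((n:ℝ) ^ 2 * X) := by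
    have := h3.trans h2
    refine le_of_mul_le_mul_left ?_ hKpos
    linarith
  have h5 : (#{G ∈ Γ | Z G ≤ s * #(kSets n k)} : ℝ) +
      #{G ∈ Γ | ¬ Z G ≤ s * #(kSets n k)} = #Γ := by
    exact_mod_cast card_filter_add_card_filter_not _
  unfold PrGnM Pru
  rw [graphsM_eq, ← hΓ, le_div_iff₀ hΓpos]
  have h6 : (#{G ∈ Γ | ¬ Z G ≤ s * #(kSets n k)} : ℝ) ≤ #Γ * ((n:ℝ) ^ 2 * X) / s := by
    rw [le_div_iff₀ hs]; exact h4
  have h7 : 80 * (n:ℝ) ^ 4 * Real.exp (-(L ^ 2 / 16)) / s * #Γ = #Γ * ((n:ℝ) ^ 2 * X) / s := by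
    rw [hX]; ring
  have h8 : (1 - 80 * (n:ℝ) ^ 4 * Real.exp (-(L ^ 2 / 16)) / s) * #Γ ≤
      #{G ∈ Γ | Z G ≤ s * #(kSets n k)} := by
    rw [sub_mul, h7, one_mul]; linarith
  convert h8

lemma eventually_exp_large {a : ℝ} (ha : 0 < a) :
    ∃ n₀ : ℕ, ∀ n ≥ n₀, 80 * (n:ℝ) ^ 4 ≤ Real.exp ((n:ℝ) ^ a) ∧ 48 ≤ (n:ℝ) ^ a := by
  have ht : Filter.Tendsto (fun n : ℕ => (n:ℝ) ^ a) Filter.atTop Filter.atTop :=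
    (tendsto_rpow_atTop ha).comp tendsto_natCast_atTop_atTop
  have h1 := ((isLittleO_rpow_exp_atTop (4 / a)).bound (by norm_num : (0:ℝ) < 1 / 80))
  have h2 := ht.eventually h1
  have h3 := ht.eventually_ge_atTop 48
  obtain ⟨n₀, hn₀⟩ := Filter.eventually_atTop.1 (h2.and h3)
  refine ⟨n₀, fun n hn => ⟨?_, (hn₀ n hn).2⟩⟩
  have h := (hn₀ n hn).1
  have e : ((n:ℝ) ^ a) ^ (4 / a) = (n:ℝ) ^ 4 := by
    rw [← Real.rpow_mul (Nat.cast_nonneg n), mul_div_cancel₀ _ ha.ne']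
    exact_mod_cast Real.rpow_natCast (n:ℝ) 4
  rw [e, Real.norm_of_nonneg (by positivity), Real.norm_of_nonneg (Real.exp_pos _).le] at h
  linarith

/-- Lemma 2.7: variance of conditional expectations.
Fix `δ, ε > 0`. There are `C > 0`, `η > 0`, `n₀` such that for all `n ≥ n₀` and `M, k` with
`M/N, k/n ∈ [δ, 1-δ]`, with probability at least `1 - exp(-n^η)` over `G_{n,M}`: for each
`i ∈ {0,1,2}`, `Var(E[(W'-W)^i·(W̄'-W̄)^(2-i) | 𝐖]) ≤ C·n^(-3+ε)`, where the randomness is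
over the uniform `k`-set `S`, `x` uniform on `S` and `x̄` uniform on `S̄`, conditioning on
`𝐖 = (W, W̄)`. -/
theorem stmt_9 (δ ε : ℝ) (hδ : 0 < δ) (hε : 0 < ε) :
    ∃ C > (0:ℝ), ∃ η > (0:ℝ), ∃ n₀ : ℕ, ∀ n ≥ n₀, ∀ M k : ℕ,
      δ ≤ (M : ℝ) / Nr n → (M : ℝ) / Nr n ≤ 1 - δ →
      δ ≤ (k : ℝ) / n → (k : ℝ) / n ≤ 1 - δ →
      PrGnM n M (fun G => ∀ i ≤ 2,
          Varu (SwapΩ n k)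
            (condExpU (SwapΩ n k)
              (fun ω =>
                (Wfun n M k G (insert ω.2.2 (ω.1.erase ω.2.1)) - Wfun n M k G ω.1) ^ i *
                (Wfun n M (n - k) G (insert ω.2.1 (ω.1ᶜ.erase ω.2.2)) -
                  Wfun n M (n - k) G ω.1ᶜ) ^ (2 - i))
              (fun ω => (Wfun n M k G ω.1, Wfun n M (n - k) G ω.1ᶜ)))
            ≤ C * (n:ℝ) ^ (-(3:ℝ) + ε))
        ≥ 1 - Real.exp (-(n:ℝ) ^ η) := by
  classical
  -- `L = n ^ (ε / 4)`, which enters the bound to the fourth power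
  set a := ε / 4 with ha
  have ha0 : 0 < a := by positivity
  obtain ⟨n₀, hn₀⟩ := eventually_exp_large ha0
  refine ⟨169 / δ ^ 4 + 121, by positivity, a, ha0, max n₀ 2, ?_⟩
  intro n hn M k hM1 hM2 hk1 hk2
  have hn2 : 2 ≤ n := le_trans (le_max_right _ _) hn
  obtain ⟨hexp, h48⟩ := hn₀ n (le_trans (le_max_left _ _) hn)
  have hn' : (2:ℝ) ≤ n := by exact_mod_cast hn2
  have hnpos : (0:ℝ) < n := by linarith
  have hNpos : 0 < Nr n := by unfold Nr; nlinarith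
  have hδ1 : δ ≤ 1 := by linarith
  rw [le_div_iff₀ hnpos] at hk1
  rw [div_le_iff₀ hnpos] at hk2
  have hk0' : (0:ℝ) < k := lt_of_lt_of_le (by positivity) hk1
  have hk0 : 0 < k := by exact_mod_cast hk0'
  have hδn : 0 < δ * n := by positivity
  have hkn : k < n := by
    have : (k:ℝ) < n := by linarith
    exact_mod_cast this
  set p := (M:ℝ) / Nr n with hp
  have hp0 : 0 ≤ p := by linarith
  have hp1 : p ≤ 1 := by linarith
  have hMN : (M:ℝ) ≤ Nr n := by rwa [hp, div_le_one hNpos] at hp1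
  set L := (n:ℝ) ^ a with hL
  have hL1 : 1 ≤ L := by linarith
  set s := Real.exp (-L) with hs
  have hmain := few_bad_prob (k := k) hn2 hkn.le hMN (by linarith : 0 < L)
    (Real.exp_pos (-L))
  rw [← hp, ← hs] at hmain
  have hfail : 80 * (n:ℝ) ^ 4 * Real.exp (-(L ^ 2 / 16)) / s ≤ s := by
    rw [div_le_iff₀ (Real.exp_pos _)]
    calc 80 * (n:ℝ) ^ 4 * Real.exp (-(L ^ 2 / 16)) ≤
        Real.exp L * Real.exp (-(L ^ 2 / 16)) := by gcongr
      _ ≤ s * s := by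
        rw [hs, ← Real.exp_add, ← Real.exp_add]
        exact Real.exp_le_exp.2 (by nlinarith)
  have hs3 : s ≤ 1 / (n:ℝ) ^ 3 := by
    rw [hs, Real.exp_neg, ← one_div]
    refine one_div_le_one_div_of_le (by positivity) (le_trans ?_ hexp)
    have : (0:ℝ) ≤ (n:ℝ) ^ 3 := by positivity
    nlinarith
  have hpow : (n:ℝ) ^ (-(3:ℝ) + ε) = L ^ 4 / (n:ℝ) ^ 3 := by
    rw [Real.rpow_add hnpos, Real.rpow_neg hnpos.le, hL, ← Real.rpow_natCast ((n:ℝ) ^ a) 4,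
      ← Real.rpow_mul hnpos.le, ← Real.rpow_natCast (n:ℝ) 3, ha]
    have : ε / 4 * ((4:ℕ):ℝ) = ε := by push_cast; ring
    rw [this]
    push_cast
    ring
  refine ge_iff_le.2 (le_trans (by linarith : 1 - Real.exp (-L) ≤ _) (hmain.trans ?_))
  unfold PrGnM Pru
  gcongr with G hGmem
  intro hfew i hi
  have hGsub : G ⊆ completeEdges n := by
    rw [graphsM_eq] at hGmem
    exact (mem_powersetCard.1 hGmem).1
  refine (var_bound (M := M) hp0 hp1 hδ hδ1 hk0 hkn (by linarith) (by linarith) hL1 hGsub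
    hfew i hi).trans ?_
  rw [hpow, add_mul]
  have h4 : 1 / (n:ℝ) ^ 3 ≤ L ^ 4 / (n:ℝ) ^ 3 := by
    gcongr
    exact one_le_pow₀ hL1
  linarith
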